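/- arXiv:2304.07664 — 12 statements merged into one kernel-verified Lean document; each statement's English description precedes it below -/
import Mathlib

section
/- For every real number M > 1 and every x with 0 < x < 1, one has 1 - (1 - x^M)^(2^M) > (1 - (1 - x)^M)^(2^M), where all powers are real powers. -/
/-!
The claim is `(1 - x^M)^N + (1 - (1-x)^M)^N < 1` with `N = 2^M`. It is symmetric under
`x ↦ 1 - x`, so assume `x ≤ 1/2` and put `s = (2x)^M ∈ (0, 1]`.

* The first term is at most `exp (-N x^M) = exp (-s) ≤ 1 / (1 + s) ≤ 1 - s / 2`.
* The function `N log (1 - (1-u)^M) - M log u` is monotone on `(0, 1/2]`: its derivative is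
  nonnegative iff `1 - (1-u)^M ≤ N u (1-u)^(M-1)`, which is a chord estimate for the convex function
  `y ↦ y^(1-M)` on `[1/2, 1]` (`one_sub_rpow_le`). Comparing the values at `x` and `1/2`, the
  second term is at most `s (1 - 1/N)^N ≤ s / e < s / 2`.
-/

/-- The convexity estimate behind the monotonicity. The chord bound
`(1-u)^(-(M-1)) ≤ 1 + (2^M - 2) u` is obtained from two Bernoulli inequalities,
`2^(-2u) ≤ 1 - u` and `(2^(M-1))^(2u) ≤ 1 + 2u (2^(M-1) - 1)`. -/
lemma one_sub_rpow_le (M u : ℝ) (hM : 1 < M) (hu0 : 0 < u) (hu : u ≤ 1 / 2) :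
    1 - (1 - u) ^ M ≤ (2 : ℝ) ^ M * u * (1 - u) ^ (M - 1) := by
  have hy : 0 < 1 - u := by linarith
  have h1 : (1 / 2 : ℝ) ^ (2 * u) ≤ 1 - u := by
    have := rpow_one_add_le_one_add_mul_self (s := -(1 / 2)) (p := 2 * u)
      (by norm_num) (by linarith) (by linarith)
    norm_num at this ⊢
    linarith
  have h2 : ((2 : ℝ) ^ (M - 1)) ^ (2 * u) ≤ 1 + 2 * u * ((2 : ℝ) ^ (M - 1) - 1) := by
    have hp : (0 : ℝ) < (2 : ℝ) ^ (M - 1) := by positivity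
    have := rpow_one_add_le_one_add_mul_self (s := (2 : ℝ) ^ (M - 1) - 1) (p := 2 * u)
      (by linarith) (by linarith) (by linarith)
    simpa using this
  have h3 : ((1 / 2 : ℝ) ^ (2 * u)) ^ (M - 1) ≤ (1 - u) ^ (M - 1) :=
    Real.rpow_le_rpow (by positivity) h1 (by linarith)
  have h4 : ((1 / 2 : ℝ) ^ (2 * u)) ^ (M - 1) * ((2 : ℝ) ^ (M - 1)) ^ (2 * u) = 1 := by
    rw [← Real.rpow_mul (by norm_num), ← Real.rpow_mul (by norm_num), mul_comm (M - 1),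
      ← Real.mul_rpow (by norm_num) (by norm_num)]
    norm_num
  have hN : (2 : ℝ) ^ M = 2 * (2 : ℝ) ^ (M - 1) := by
    rw [Real.rpow_sub_one (by norm_num)]; ring
  have hyM : (1 - u) ^ M = (1 - u) * (1 - u) ^ (M - 1) := by
    rw [Real.rpow_sub_one hy.ne']; field_simp
  have hyp : 0 < (1 - u) ^ (M - 1) := by positivity
  have h5 : 1 ≤ (1 - u) ^ (M - 1) * (1 + 2 * u * ((2 : ℝ) ^ (M - 1) - 1)) := by
    refine h4.symm.trans_le ?_
    exact mul_le_mul h3 h2 (by positivity) hyp.le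
  rw [hyM, hN]
  nlinarith [mul_pos hu0 hyp]

lemma one_sub_rpow_pos (M u : ℝ) (hM : 1 < M) (hu0 : 0 < u) (hu : u < 1) :
    0 < 1 - (1 - u) ^ M := by
  have := Real.rpow_lt_one (x := 1 - u) (z := M) (by linarith) (by linarith) (by linarith)
  linarith

lemma monotoneOn_log_ratio (M : ℝ) (hM : 1 < M) :
    MonotoneOn (fun u : ℝ => (2 : ℝ) ^ M * Real.log (1 - (1 - u) ^ M) - M * Real.log u)
      (Set.Ioc 0 (1 / 2)) := by
  have hder : ∀ u ∈ Set.Ioc (0 : ℝ) (1 / 2), HasDerivAt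
      (fun u : ℝ => (2 : ℝ) ^ M * Real.log (1 - (1 - u) ^ M) - M * Real.log u)
      ((2 : ℝ) ^ M * (M * (1 - u) ^ (M - 1) / (1 - (1 - u) ^ M)) - M * u⁻¹) u := by
    intro u hu
    have hf := one_sub_rpow_pos M u hM hu.1 (by linarith [hu.2])
    have h1 : HasDerivAt (fun u : ℝ => 1 - (1 - u) ^ M) (M * (1 - u) ^ (M - 1)) u := by
      have := (((hasDerivAt_id u).const_sub 1).rpow_const (p := M)
        (Or.inr hM.le)).const_sub 1
      simpa using this
    exact ((h1.log hf.ne').const_mul _).sub ((Real.hasDerivAt_log hu.1.ne').const_mul _)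
  apply monotoneOn_of_deriv_nonneg (convex_Ioc _ _)
  · exact fun u hu => (hder u hu).continuousAt.continuousWithinAt
  · exact fun u hu => (hder u (interior_subset hu)).differentiableAt.differentiableWithinAt
  · intro u hu
    have hu := interior_subset hu
    rw [(hder u hu).deriv]
    have hf := one_sub_rpow_pos M u hM hu.1 (by linarith [hu.2])
    have key := one_sub_rpow_le M u hM hu.1 hu.2
    have hu0 := hu.1
    have : (2 : ℝ) ^ M * (M * (1 - u) ^ (M - 1) / (1 - (1 - u) ^ M)) - M * u⁻¹
        = M * ((2 : ℝ) ^ M * u * (1 - u) ^ (M - 1) - (1 - (1 - u) ^ M))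
          / (u * (1 - (1 - u) ^ M)) := by
      field_simp
    rw [this]
    exact div_nonneg (mul_nonneg (by linarith) (by linarith)) (by positivity)

lemma one_sub_rpow_rpow_lt (M x : ℝ) (hM : 1 < M) (hx0 : 0 < x) (hx : x ≤ 1 / 2) :
    (1 - (1 - x) ^ M) ^ ((2 : ℝ) ^ M) < (2 * x) ^ M / 2 := by
  have hf := one_sub_rpow_pos M x hM hx0 (by linarith)
  have hN : (0 : ℝ) < (2 : ℝ) ^ M := by positivity
  have hmono := monotoneOn_log_ratio M hM ⟨hx0, hx⟩ ⟨by norm_num, le_refl _⟩ hx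
  have hhalf := one_sub_rpow_pos M (1 / 2) hM (by norm_num) (by norm_num)
  have hlog : (2 : ℝ) ^ M * Real.log (1 - (1 - 1 / 2) ^ M) ≤ -1 := by
    have h1 := Real.log_le_sub_one_of_pos hhalf
    have h2 : (2 : ℝ) ^ M * (1 - 1 / 2 : ℝ) ^ M = 1 := by
      rw [← Real.mul_rpow (by norm_num) (by norm_num)]; norm_num
    nlinarith
  have h2 : Real.log 2 < 1 := by linarith [Real.log_two_lt_d9]
  rw [← Real.log_lt_log_iff (by positivity) (by positivity), Real.log_rpow hf,
    Real.log_div (by positivity) (by norm_num), Real.log_rpow (by positivity),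
    Real.log_mul (by norm_num) hx0.ne']
  simp only [one_div, Real.log_inv] at hmono hlog
  linarith

lemma one_sub_rpow_rpow_le (M x : ℝ) (hM : 1 < M) (hx0 : 0 < x) (hx : x ≤ 1 / 2) :
    (1 - x ^ M) ^ ((2 : ℝ) ^ M) ≤ 1 - (2 * x) ^ M / 2 := by
  have hs0 : 0 < (2 * x) ^ M := by positivity
  have hs1 : (2 * x) ^ M ≤ 1 := Real.rpow_le_one (by linarith) (by linarith) (by linarith)
  have hx1 : x ^ M ≤ 1 := Real.rpow_le_one hx0.le (by linarith) (by linarith)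
  have h1 : (1 - x ^ M) ^ ((2 : ℝ) ^ M) ≤ Real.exp (-(2 * x) ^ M) := by
    calc (1 - x ^ M) ^ ((2 : ℝ) ^ M) ≤ (Real.exp (-x ^ M)) ^ ((2 : ℝ) ^ M) :=
          Real.rpow_le_rpow (by linarith) (Real.one_sub_le_exp_neg _) (by positivity)
      _ = Real.exp (-(2 * x) ^ M) := by
          rw [← Real.exp_mul, Real.mul_rpow (by norm_num) hx0.le]; ring_nf
  refine h1.trans ?_
  have h2 := Real.add_one_le_exp ((2 * x) ^ M)
  rw [Real.exp_neg, inv_le_iff_one_le_mul₀ (Real.exp_pos _)]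
  nlinarith

lemma add_lt_one_of_le_half (M x : ℝ) (hM : 1 < M) (hx0 : 0 < x) (hx : x ≤ 1 / 2) :
    (1 - x ^ M) ^ ((2 : ℝ) ^ M) + (1 - (1 - x) ^ M) ^ ((2 : ℝ) ^ M) < 1 := by
  linarith [one_sub_rpow_rpow_le M x hM hx0 hx, one_sub_rpow_rpow_lt M x hM hx0 hx]

/-- For every real `M > 1` and every `x` with `0 < x < 1`,
`1 - (1 - x^M)^(2^M) > (1 - (1 - x)^M)^(2^M)`, all powers being real powers. -/
theorem stmt_0 (M x : ℝ) (hM : 1 < M) (hx0 : 0 < x) (hx1 : x < 1) :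
    1 - (1 - x ^ M) ^ ((2 : ℝ) ^ M) > (1 - (1 - x) ^ M) ^ ((2 : ℝ) ^ M) := by
  rcases le_total x (1 / 2) with h | h
  · linarith [add_lt_one_of_le_half M x hM hx0 h]
  · have := add_lt_one_of_le_half M (1 - x) hM (by linarith) (by linarith)
    rw [sub_sub_cancel] at this
    linarith
end

section
/- Let m and n be positive real numbers. Then the inequality 1 - (1 - x^(2^m))^(2^n) ≥ (1 - (1 - x)^(2^m))^(2^n) holds for all x ∈ [0,1] if and only if (1 - 2^(-2^m))^(2^n) ≤ 1/2. -/
/-!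
Put `a = 2 ^ m > 1`, `b = 2 ^ n > 1`, `g x = (1 - x ^ a) ^ b` and `h x = g x + g (1 - x)`. The
inequality says `h ≤ 1` on `[0, 1]`, and the condition on the right says `h (1/2) ≤ 1`, so only
sufficiency needs an argument. By symmetry it is enough to bound `h` on `[0, 1/2]`, where
`h 0 = 1` and `h (1/2) ≤ 1`; it is shown that `h` first decreases and then increases there.

The sign of `h'` is opposite to that of `ψ x = φ x - φ (1 - x)`, where
`φ x = (a - 1) log x + (b - 1) log (1 - x ^ a)` is the logarithm of `-g' x / (a b)`. Moreover
`x (1 - x) ψ' x = (a - 1) - (b - 1) a (w x + w (1 - x))` with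
`w y = (1 - y) y ^ a / (1 - y ^ a)`. The function `w` is convex on `(0, 1)` (`convexOn_wFun`), so
`ψ'` changes sign at most once on `(0, 1/2)`, from negative to positive. As `ψ (1/2) = 0`, once
`ψ` is nonpositive it stays so up to `1/2` (`psi_nonpos_of_nonpos`).

Convexity of `w` reduces to `a (1 + y ^ a) (1 - y) ≥ (1 + y) (1 - y ^ a)` (`coth_ineq`), which for
`y = exp (-2 t)` is `a coth (a t) ≥ coth t`, and follows from Bernoulli's inequality after one
differentiation.
-/

namespace PowerSwap

lemma hasDerivAt_rpow {a y : ℝ} (hy : 0 < y) :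
    HasDerivAt (fun x : ℝ => x ^ a) (a * y ^ a / y) y := by
  have h := Real.hasDerivAt_rpow_const (x := y) (p := a) (Or.inl hy.ne')
  rwa [Real.rpow_sub_one hy.ne', ← mul_div_assoc] at h

lemma bernoulli_aux {a y : ℝ} (ha : 1 ≤ a) (hy : 0 < y) :
    a * y ^ a / y ≤ (a - 1) * y ^ a + 1 := by
  have h := one_add_mul_self_le_rpow_one_add (s := y⁻¹ - 1)
    (by have := inv_pos.2 hy; linarith) ha
  rw [add_sub_cancel, Real.inv_rpow hy.le] at h
  have hY : 0 < y ^ a := Real.rpow_pos_of_pos hy a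
  have h2 := mul_le_mul_of_nonneg_right h hY.le
  rw [inv_mul_cancel₀ hY.ne'] at h2
  have : a * y ^ a / y = a * y⁻¹ * y ^ a := by ring
  rw [this]
  linarith

/-- With `y = exp (-2 t)` this reads `coth t ≤ a * coth (a * t)`. -/
lemma coth_ineq {a y : ℝ} (ha : 1 ≤ a) (hy : 0 < y) (hy1 : y < 1) :
    (1 + y) * (1 - y ^ a) ≤ a * (1 + y ^ a) * (1 - y) := by
  by_contra! hlt
  -- The difference of the two sides vanishes at `1` and is nonincreasing on `(0, 1)`.
  have hd : ∀ x : ℝ, 0 < x →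
      HasDerivAt (fun x : ℝ => a * (1 + x ^ a) * (1 - x) - (1 + x) * (1 - x ^ a))
        ((a + 1) * (a * x ^ a / x - (a - 1) * x ^ a - 1)) x := by
    intro x hx
    have hp := hasDerivAt_rpow (a := a) hx
    have hi := hasDerivAt_id' x
    have := (((hp.const_add 1).const_mul a).mul (hi.const_sub 1)).sub
      ((hi.const_add 1).mul (hp.const_sub 1))
    refine this.congr_deriv ?_
    field_simp
    ring
  obtain ⟨c, hc, hc'⟩ := exists_hasDerivAt_eq_slope _ _ hy1
    (fun x hx => (hd x (lt_of_lt_of_le hy hx.1)).continuousAt.continuousWithinAt)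
    (fun x hx => hd x (hy.trans hx.1))
  have hb := bernoulli_aux ha (hy.trans hc.1)
  have h1 : (a + 1) * (a * c ^ a / c - (a - 1) * c ^ a - 1) ≤ 0 :=
    mul_nonpos_of_nonneg_of_nonpos (by linarith) (by linarith)
  rw [hc'] at h1
  simp only [Real.one_rpow, sub_self, mul_zero, zero_sub] at h1
  have : 0 < -(a * (1 + y ^ a) * (1 - y) - (1 + y) * (1 - y ^ a)) / (1 - y) :=
    div_pos (by linarith) (by linarith)
  linarith

/-- The weight `(1 - y) y ^ a / (1 - y ^ a)` whose symmetrisation `w y + w (1 - y)` governs the sign of the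
derivative of `ψ`. -/
noncomputable def wFun (a y : ℝ) : ℝ := (1 - y) * (y ^ a / (1 - y ^ a))

lemma one_sub_rpow_pos {a y : ℝ} (ha : 1 < a) (hy : y ∈ Set.Ioo (0 : ℝ) 1) : 0 < 1 - y ^ a :=
  sub_pos.2 (Real.rpow_lt_one hy.1.le hy.2 (by linarith))

lemma convexOn_wFun {a : ℝ} (ha : 1 < a) : ConvexOn ℝ (Set.Ioo 0 1) (wFun a) := by
  have hd : ∀ y ∈ Set.Ioo (0 : ℝ) 1, HasDerivAt (wFun a)
      (-(y ^ a / (1 - y ^ a)) + (1 - y) * (a * y ^ a / (y * (1 - y ^ a) ^ 2))) y := by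
    intro y hy
    have hq := one_sub_rpow_pos ha hy
    have hy0 := hy.1
    have hp := hasDerivAt_rpow (a := a) hy.1
    have := ((hasDerivAt_id' y).const_sub 1).mul (hp.div (hp.const_sub 1) hq.ne')
    refine this.congr_deriv ?_
    simp only [Pi.div_apply]
    field_simp
    ring
  have hd2 : ∀ y ∈ Set.Ioo (0 : ℝ) 1, HasDerivAt
      (fun y : ℝ => -(y ^ a / (1 - y ^ a)) + (1 - y) * (a * y ^ a / (y * (1 - y ^ a) ^ 2)))
      (a * y ^ a / (y ^ 2 * (1 - y ^ a) ^ 3) *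
        (a * (1 + y ^ a) * (1 - y) - (1 + y) * (1 - y ^ a))) y := by
    intro y hy
    have hq := one_sub_rpow_pos ha hy
    have hy0 := hy.1
    have hp := hasDerivAt_rpow (a := a) hy.1
    have hi := hasDerivAt_id' y
    have := ((hp.div (hp.const_sub 1) hq.ne').neg).add ((hi.const_sub 1).mul
      ((hp.const_mul a).div (hi.mul ((hp.const_sub 1).pow 2))
        (mul_pos hy.1 (pow_pos hq 2)).ne'))
    refine this.congr_deriv ?_
    simp only [Pi.mul_apply, Pi.pow_apply, Pi.div_apply]
    field_simp
    ring
  refine convexOn_of_hasDerivWithinAt2_nonneg (convex_Ioo 0 1)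
    (fun y hy => (hd y hy).continuousAt.continuousWithinAt)
    (fun y hy => (hd y (interior_subset hy)).hasDerivWithinAt)
    (fun y hy => (hd2 y (interior_subset hy)).hasDerivWithinAt) ?_
  intro y hy
  replace hy := interior_subset hy
  have hq := one_sub_rpow_pos ha hy
  have hY : 0 < y ^ a := Real.rpow_pos_of_pos hy.1 a
  have hy0 := hy.1
  have := coth_ineq ha.le hy.1 hy.2
  exact mul_nonneg (by positivity) (by linarith)

lemma wFun_symm_anti {a c d : ℝ} (ha : 1 < a) (hc : 0 < c) (hcd : c < d) (hd : d ≤ 1 / 2) :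
    wFun a d + wFun a (1 - d) ≤ wFun a c + wFun a (1 - c) := by
  have hw := convexOn_wFun ha
  -- Both `d` and `1 - d` are convex combinations of `c` and `1 - c`, with swapped weights.
  have h2 : 0 < 1 - 2 * c := by linarith
  have hs : 0 ≤ (1 - c - d) / (1 - 2 * c) := div_nonneg (by linarith) h2.le
  have ht : 0 ≤ (d - c) / (1 - 2 * c) := div_nonneg (by linarith) h2.le
  have hst : (1 - c - d) / (1 - 2 * c) + (d - c) / (1 - 2 * c) = 1 := by
    rw [← add_div, div_eq_iff h2.ne']
    ring
  have hcm : c ∈ Set.Ioo (0 : ℝ) 1 := ⟨hc, by linarith⟩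
  have hcm' : 1 - c ∈ Set.Ioo (0 : ℝ) 1 := ⟨by linarith, by linarith⟩
  have e1 := hw.2 hcm hcm' hs ht hst
  have e2 := hw.2 hcm' hcm hs ht hst
  simp only [smul_eq_mul] at e1 e2
  have i1 : (1 - c - d) / (1 - 2 * c) * c + (d - c) / (1 - 2 * c) * (1 - c) = d := by
    rw [div_mul_eq_mul_div, div_mul_eq_mul_div, ← add_div, div_eq_iff h2.ne']
    ring
  have i2 : (1 - c - d) / (1 - 2 * c) * (1 - c) + (d - c) / (1 - 2 * c) * c = 1 - d := by
    rw [div_mul_eq_mul_div, div_mul_eq_mul_div, ← add_div, div_eq_iff h2.ne']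
    ring
  rw [i1] at e1
  rw [i2] at e2
  have : ∀ u v s t : ℝ, s + t = 1 → (s * u + t * v) + (s * v + t * u) = u + v := by
    intro u v s t h
    linear_combination (u + v) * h
  have := this (wFun a c) (wFun a (1 - c)) _ _ hst
  linarith

/-- The logarithm of `-g' x / (a * b)`, where `g x = (1 - x ^ a) ^ b`. -/
noncomputable def phi (a b x : ℝ) : ℝ := (a - 1) * Real.log x + (b - 1) * Real.log (1 - x ^ a)

lemma hasDerivAt_g {a b x : ℝ} (ha : 1 < a) (hx : x ∈ Set.Ioo (0 : ℝ) 1) :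
    HasDerivAt (fun x : ℝ => (1 - x ^ a) ^ b) (-(a * b * Real.exp (phi a b x))) x := by
  have hq := one_sub_rpow_pos ha hx
  have hp := Real.hasDerivAt_rpow_const (x := x) (p := a) (Or.inl hx.1.ne')
  refine ((hp.const_sub 1).rpow_const (p := b) (Or.inl hq.ne')).congr_deriv ?_
  have e : Real.exp (phi a b x) = x ^ (a - 1) * (1 - x ^ a) ^ (b - 1) := by
    rw [phi, Real.exp_add, Real.rpow_def_of_pos hq, Real.rpow_def_of_pos hx.1 (a - 1),
      mul_comm (a - 1), mul_comm (b - 1)]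
  rw [e]
  ring

lemma hasDerivAt_phi {a b x : ℝ} (ha : 1 < a) (hx : x ∈ Set.Ioo (0 : ℝ) 1) :
    HasDerivAt (phi a b) (((a - 1) * (1 - x) - (b - 1) * a * wFun a x) / (x * (1 - x))) x := by
  have hq := one_sub_rpow_pos ha hx
  have hx0 := hx.1
  have hx1 : 0 < 1 - x := sub_pos.2 hx.2
  have hp := hasDerivAt_rpow (a := a) hx.1
  refine (((Real.hasDerivAt_log hx.1.ne').const_mul (a - 1)).add
    (((hp.const_sub 1).log hq.ne').const_mul (b - 1))).congr_deriv ?_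
  rw [wFun]
  field_simp
  ring

lemma hasDerivAt_psi {a b x : ℝ} (ha : 1 < a) (hx : x ∈ Set.Ioo (0 : ℝ) 1) :
    HasDerivAt (fun x => phi a b x - phi a b (1 - x))
      (((a - 1) - (b - 1) * a * (wFun a x + wFun a (1 - x))) / (x * (1 - x))) x := by
  have hx' : 1 - x ∈ Set.Ioo (0 : ℝ) 1 := ⟨by linarith [hx.2], by linarith [hx.1]⟩
  have hx0 := hx.1
  have hx1 := hx'.1
  refine ((hasDerivAt_phi (b := b) ha hx).sub
    ((hasDerivAt_phi (b := b) ha hx').comp_const_sub 1 x)).congr_deriv ?_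
  rw [sub_sub_cancel]
  field_simp
  ring

/-- Since `ψ'` can only change sign from negative to positive on `(0, 1/2)` and `ψ (1/2) = 0`, the
function `ψ x = φ x - φ (1 - x)` stays nonpositive on `(0, 1/2)` once it is nonpositive. -/
lemma psi_nonpos_of_nonpos {a b c d : ℝ} (ha : 1 < a) (hb : 1 < b) (hc : 0 < c) (hcd : c < d)
    (hd : d < 1 / 2) (h : phi a b c - phi a b (1 - c) ≤ 0) :
    phi a b d - phi a b (1 - d) ≤ 0 := by
  by_contra! hpos
  obtain ⟨s, hs, hs'⟩ := exists_hasDerivAt_eq_slope _ _ hcd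
    (fun x hx => (hasDerivAt_psi (b := b) ha
      ⟨by linarith [hx.1], by linarith [hx.2]⟩).continuousAt.continuousWithinAt)
    (fun x hx => hasDerivAt_psi (b := b) ha ⟨by linarith [hx.1], by linarith [hx.2]⟩)
  obtain ⟨t, ht, ht'⟩ := exists_hasDerivAt_eq_slope _ _ hd
    (fun x hx => (hasDerivAt_psi (b := b) ha
      ⟨by linarith [hx.1], by linarith [hx.2]⟩).continuousAt.continuousWithinAt)
    (fun x hx => hasDerivAt_psi (b := b) ha ⟨by linarith [hx.1], by linarith [hx.2]⟩)
  obtain ⟨hs1, hs2⟩ := hs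
  obtain ⟨ht1, ht2⟩ := ht
  have hhalf : phi a b (1 / 2) - phi a b (1 - 1 / 2) = 0 := by norm_num
  have h1 : 0 < ((a - 1) - (b - 1) * a * (wFun a s + wFun a (1 - s))) / (s * (1 - s)) := by
    rw [hs']
    exact div_pos (by linarith) (by linarith)
  have h2 : ((a - 1) - (b - 1) * a * (wFun a t + wFun a (1 - t))) / (t * (1 - t)) < 0 := by
    rw [ht', hhalf]
    exact div_neg_of_neg_of_pos (by linarith) (by linarith)
  have ps : 0 < s * (1 - s) := mul_pos (by linarith) (by linarith)
  have pt : 0 < t * (1 - t) := mul_pos (by linarith) (by linarith)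
  rw [div_pos_iff_of_pos_right ps] at h1
  rw [div_neg_iff] at h2
  have h2' : (a - 1) - (b - 1) * a * (wFun a t + wFun a (1 - t)) < 0 := by
    rcases h2 with h2 | h2
    · linarith [h2.2]
    · exact h2.1
  have hw := wFun_symm_anti ha (by linarith : 0 < s) (by linarith : s < t) ht2.le
  have := mul_le_mul_of_nonneg_left hw
    (mul_nonneg (by linarith : 0 ≤ b - 1) (by linarith : 0 ≤ a))
  linarith

lemma hasDerivAt_h {a b x : ℝ} (ha : 1 < a) (hx : x ∈ Set.Ioo (0 : ℝ) 1) :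
    HasDerivAt (fun x : ℝ => (1 - x ^ a) ^ b + (1 - (1 - x) ^ a) ^ b)
      (a * b * (Real.exp (phi a b (1 - x)) - Real.exp (phi a b x))) x := by
  have hx' : 1 - x ∈ Set.Ioo (0 : ℝ) 1 := ⟨by linarith [hx.2], by linarith [hx.1]⟩
  refine ((hasDerivAt_g (b := b) ha hx).add
    ((hasDerivAt_g (b := b) ha hx').comp_const_sub 1 x)).congr_deriv ?_
  ring

lemma h_le_one_left {a b x : ℝ} (ha : 1 < a) (hb : 1 < b)
    (hhalf : (1 - (1 / 2 : ℝ) ^ a) ^ b ≤ 1 / 2) (hx0 : 0 ≤ x) (hx1 : x ≤ 1 / 2) :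
    (1 - x ^ a) ^ b + (1 - (1 - x) ^ a) ^ b ≤ 1 := by
  have hzero : (1 - (0 : ℝ) ^ a) ^ b + (1 - (1 - 0 : ℝ) ^ a) ^ b = 1 := by
    rw [Real.zero_rpow (by linarith)]
    simp [Real.zero_rpow (by linarith : b ≠ 0)]
  have hhalf' : (1 - (1 / 2 : ℝ) ^ a) ^ b + (1 - (1 - 1 / 2 : ℝ) ^ a) ^ b ≤ 1 := by
    have : (1 - 1 / 2 : ℝ) = 1 / 2 := by norm_num
    rw [this]
    linarith
  rcases hx0.eq_or_lt with rfl | hx0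
  · exact hzero.le
  rcases hx1.eq_or_lt with rfl | hx1
  · exact hhalf'
  by_contra! hgt
  have hcont : Continuous (fun x : ℝ => (1 - x ^ a) ^ b + (1 - (1 - x) ^ a) ^ b) := by
    have h1 : Continuous (fun x : ℝ => x ^ a) := Real.continuous_rpow_const (by linarith)
    have h2 : Continuous (fun x : ℝ => x ^ b) := Real.continuous_rpow_const (by linarith)
    exact (h2.comp (continuous_const.sub h1)).add
      (h2.comp (continuous_const.sub (h1.comp (continuous_const.sub continuous_id))))
  obtain ⟨c, ⟨hc1, hc2⟩, hc'⟩ := exists_hasDerivAt_eq_slope _ _ hx0 hcont.continuousOn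
    (fun x hx => hasDerivAt_h (b := b) ha ⟨by linarith [hx.1], by linarith [hx.2]⟩)
  obtain ⟨d, ⟨hd1, hd2⟩, hd'⟩ := exists_hasDerivAt_eq_slope _ _ hx1 hcont.continuousOn
    (fun x hx => hasDerivAt_h (b := b) ha ⟨by linarith [hx.1], by linarith [hx.2]⟩)
  have hab : 0 < a * b := mul_pos (by linarith) (by linarith)
  have h1 : 0 < a * b * (Real.exp (phi a b (1 - c)) - Real.exp (phi a b c)) := by
    rw [hc', hzero]
    exact div_pos (by linarith) (by linarith)
  have h2 : a * b * (Real.exp (phi a b (1 - d)) - Real.exp (phi a b d)) < 0 := by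
    rw [hd']
    exact div_neg_of_neg_of_pos (by linarith) (by linarith)
  have h1' := Real.exp_lt_exp.1 (sub_pos.1 (pos_of_mul_pos_right h1 hab.le))
  have h2' : phi a b (1 - d) < phi a b d := by
    by_contra! hle
    have := mul_nonneg hab.le (sub_nonneg.2 (Real.exp_le_exp.2 hle))
    linarith
  have := psi_nonpos_of_nonpos ha hb hc1 (hc2.trans hd1) hd2 (by linarith)
  linarith

end PowerSwap

/-- For positive reals `m, n`, the inequality
`1 - (1 - x^(2^m))^(2^n) ≥ (1 - (1 - x)^(2^m))^(2^n)` holds for all `x ∈ [0,1]`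
iff `(1 - 2^(-2^m))^(2^n) ≤ 1/2`. -/
theorem stmt_1 (m n : ℝ) (hm : 0 < m) (hn : 0 < n) :
    (∀ x ∈ Set.Icc (0 : ℝ) 1,
        1 - (1 - x ^ ((2 : ℝ) ^ m)) ^ ((2 : ℝ) ^ n)
          ≥ (1 - (1 - x) ^ ((2 : ℝ) ^ m)) ^ ((2 : ℝ) ^ n))
      ↔ (1 - (2 : ℝ) ^ (-(2 : ℝ) ^ m)) ^ ((2 : ℝ) ^ n) ≤ 1 / 2 := by
  have ha : 1 < (2 : ℝ) ^ m := Real.one_lt_rpow (by norm_num) hm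
  have hb : 1 < (2 : ℝ) ^ n := Real.one_lt_rpow (by norm_num) hn
  generalize (2 : ℝ) ^ m = a at *
  generalize (2 : ℝ) ^ n = b at *
  have e : (2 : ℝ) ^ (-a) = (1 / 2) ^ a := by
    rw [Real.rpow_neg (by norm_num), one_div, Real.inv_rpow (by norm_num)]
  rw [e]
  constructor
  · intro h
    have := h (1 / 2) ⟨by norm_num, by norm_num⟩
    have e2 : (1 - 1 / 2 : ℝ) = 1 / 2 := by norm_num
    rw [e2] at this
    linarith
  · rintro h x ⟨hx0, hx1⟩
    rcases le_total x (1 / 2) with hx | hx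
    · have := PowerSwap.h_le_one_left ha hb h hx0 hx
      linarith
    · have := PowerSwap.h_le_one_left ha hb h (x := 1 - x) (by linarith) (by linarith)
      rw [sub_sub_cancel] at this
      linarith
end

section
/- For every positive integer m, setting M := 2^m, the inequality 1 - (1 - x^M)^(2^M) ≥ (1 - (1 - x)^M)^(2^M) holds for all x ∈ [0,1]. -/
/-!
Write `N = 2 ^ M`. The claim is `(1 - x ^ M) ^ N + (1 - (1 - x) ^ M) ^ N ≤ 1`, which is symmetric
under `x ↦ 1 - x`, so it suffices to treat `0 ≤ x ≤ 1 / 2`. Put `A = N * x ^ M = (2 * x) ^ M ≤ 1`.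

* Bernoulli's inequality gives `(1 - x ^ M) ^ N ≤ 1 / (1 + A) ≤ 1 - A / 2`
  (`one_sub_pow_mul_one_add_le`).
* The quotient `(1 - (1 - x) ^ M) ^ N / x ^ M` is increasing on `(0, 1 / 2]`: with `u = 1 - x`, the
  sign of its logarithmic derivative is that of `N * (1 - u) * u ^ (M - 1) - (1 - u ^ M)`, which is
  nonnegative for `u ≥ 1 / 2` (`one_sub_pow_le`). Comparing with the value at `x = 1 / 2` gives
  `(1 - (1 - x) ^ M) ^ N ≤ A * (1 - 1 / N) ^ N ≤ A / 2` (`one_sub_pow_pow_le`).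
-/

namespace WuSiegel

/-- The inequality behind the monotonicity of `(1 - (1 - x) ^ k) ^ (2 ^ k) / x ^ k`; after division
by `(1 - u) * u ^ j` it reads `∑ i ≤ j, u⁻¹ ^ i ≤ ∑ i ≤ j, 2 ^ i`. -/
lemma one_sub_pow_le (j : ℕ) (u : ℝ) (h1 : 1 / 2 ≤ u) (h2 : u ≤ 1) :
    1 - u ^ (j + 1) ≤ (2 ^ (j + 1) - 1) * (1 - u) * u ^ j := by
  induction j with
  | zero => norm_num
  | succ j ih =>
    have hu : u ^ (j + 1) ≤ 1 := pow_le_one₀ (by linarith) h2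
    have e1 := mul_le_mul_of_nonneg_left ih (show 0 ≤ 2 * u by linarith)
    have e2 : 0 ≤ (2 * u - 1) * (1 - u ^ (j + 1)) :=
      mul_nonneg (by linarith) (by linarith)
    have e3 : (2 ^ (j + 1 + 1) - 1) * (1 - u) * u ^ (j + 1)
        = 2 * u * ((2 ^ (j + 1) - 1) * (1 - u) * u ^ j) + (1 - u) * u ^ (j + 1) := by ring
    have e4 : u ^ (j + 1 + 1) = u * u ^ (j + 1) := by ring
    rw [e3, e4]
    nlinarith

lemma one_sub_pow_mul_one_add_le (n : ℕ) (t : ℝ) (h0 : 0 ≤ t) (h1 : t ≤ 1) :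
    (1 - t) ^ n * (1 + n * t) ≤ 1 := by
  have hb : 1 + n * t ≤ (1 + t) ^ n := one_add_mul_le_pow (by linarith) n
  calc (1 - t) ^ n * (1 + n * t) ≤ (1 - t) ^ n * (1 + t) ^ n :=
        mul_le_mul_of_nonneg_left hb (pow_nonneg (by linarith) n)
    _ = (1 - t ^ 2) ^ n := by rw [← mul_pow]; ring
    _ ≤ 1 := pow_le_one₀ (by nlinarith) (by nlinarith)

/-- `log ((1 - (1 - x) ^ (j + 1)) ^ (2 ^ (j + 1)) / x ^ (j + 1))` is increasing on `(0, 1 / 2]`. -/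
lemma monotoneOn_log (j : ℕ) :
    MonotoneOn (fun x : ℝ => 2 ^ (j + 1) * Real.log (1 - (1 - x) ^ (j + 1))
      - (j + 1) * Real.log x) (Set.Ioc 0 (1 / 2)) := by
  have hy : ∀ x ∈ Set.Ioc (0 : ℝ) (1 / 2), 0 < 1 - (1 - x) ^ (j + 1) := fun x hx => by
    have : (1 - x) ^ (j + 1) < 1 :=
      pow_lt_one₀ (by linarith [hx.2]) (by linarith [hx.1]) (by omega)
    linarith
  have hd : ∀ x ∈ Set.Ioc (0 : ℝ) (1 / 2), HasDerivAt
      (fun x : ℝ => 2 ^ (j + 1) * Real.log (1 - (1 - x) ^ (j + 1)) - (j + 1) * Real.log x)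
      (2 ^ (j + 1) * (((j + 1) * (1 - x) ^ j) / (1 - (1 - x) ^ (j + 1)))
        - (j + 1) * (1 / x)) x := fun x hx => by
    have a := (((((hasDerivAt_id x).const_sub 1).pow (j + 1)).const_sub 1).log
      (hy x hx).ne').const_mul ((2 : ℝ) ^ (j + 1))
    have b := ((hasDerivAt_id x).log hx.1.ne').const_mul ((j : ℝ) + 1)
    refine (a.sub b).congr_deriv ?_
    simp
  refine monotoneOn_of_deriv_nonneg (convex_Ioc _ _)
    (fun x hx => (hd x hx).continuousAt.continuousWithinAt)
    (fun x hx => (hd x (interior_subset hx)).differentiableAt.differentiableWithinAt)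
    (fun x hx => ?_)
  have hx' := interior_subset hx
  rw [(hd x hx').deriv]
  have hx0 := hx'.1
  have hy0 := hy x hx'
  have key := one_sub_pow_le j (1 - x) (by linarith [hx'.2]) (by linarith)
  have hp : 0 ≤ x * (1 - x) ^ j := mul_nonneg hx0.le (pow_nonneg (by linarith [hx'.2]) j)
  have hle : 1 / x ≤ 2 ^ (j + 1) * (1 - x) ^ j / (1 - (1 - x) ^ (j + 1)) := by
    rw [div_le_div_iff₀ hx0 hy0]
    nlinarith
  have hmul := mul_le_mul_of_nonneg_left hle (show (0 : ℝ) ≤ j + 1 by positivity)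
  have e : (2 : ℝ) ^ (j + 1) * (((j + 1) * (1 - x) ^ j) / (1 - (1 - x) ^ (j + 1)))
      = (j + 1) * (2 ^ (j + 1) * (1 - x) ^ j / (1 - (1 - x) ^ (j + 1))) := by ring
  rw [e]
  linarith

lemma one_sub_pow_pow_le (j : ℕ) (x : ℝ) (h0 : 0 < x) (h1 : x ≤ 1 / 2) :
    (1 - (1 - x) ^ (j + 1)) ^ (2 ^ (j + 1)) ≤ (2 * x) ^ (j + 1) / 2 := by
  have hm := monotoneOn_log j ⟨h0, h1⟩ (show (1 / 2 : ℝ) ∈ Set.Ioc 0 (1 / 2) by norm_num) h1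
  have hy : 0 < 1 - (1 - x) ^ (j + 1) := by
    have : (1 - x) ^ (j + 1) < 1 := pow_lt_one₀ (by linarith) (by linarith) (by omega)
    linarith
  have ht : (1 / 2 : ℝ) ^ (j + 1) < 1 := pow_lt_one₀ (by norm_num) (by norm_num) (by omega)
  have ht0 : (0 : ℝ) < (1 / 2) ^ (j + 1) := by positivity
  have hc : (1 - (1 / 2 : ℝ) ^ (j + 1)) ^ (2 ^ (j + 1)) ≤ 1 / 2 := by
    have h := one_sub_pow_mul_one_add_le (2 ^ (j + 1)) ((1 / 2) ^ (j + 1)) ht0.le ht.le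
    have e : ((2 ^ (j + 1) : ℕ) : ℝ) * (1 / 2) ^ (j + 1) = 1 := by
      push_cast
      rw [← mul_pow]
      norm_num
    rw [e] at h
    linarith
  have hlog : Real.log ((1 - (1 - x) ^ (j + 1)) ^ (2 ^ (j + 1)))
      ≤ Real.log ((2 * x) ^ (j + 1) * (1 - (1 / 2 : ℝ) ^ (j + 1)) ^ (2 ^ (j + 1))) := by
    have hz : 0 < 1 - (1 / 2 : ℝ) ^ (j + 1) := by linarith
    rw [Real.log_mul (by positivity) (pow_pos hz _).ne', Real.log_pow, Real.log_pow, Real.log_pow,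
      Real.log_mul (by norm_num) h0.ne']
    have e2 : Real.log (1 / 2) = - Real.log 2 := by rw [one_div, Real.log_inv]
    have e3 : (1 - 1 / 2 : ℝ) = 1 / 2 := by norm_num
    simp only [e3, e2] at hm
    push_cast
    linarith
  have hz : 0 < 1 - (1 / 2 : ℝ) ^ (j + 1) := by linarith
  have hle := (Real.log_le_log_iff (pow_pos hy _)
    (mul_pos (by positivity) (pow_pos hz _))).1 hlog
  have := mul_le_mul_of_nonneg_left hc (show 0 ≤ (2 * x) ^ (j + 1) by positivity)
  linarith

lemma add_le_one_of_le_half (j : ℕ) (x : ℝ) (h0 : 0 ≤ x) (h1 : x ≤ 1 / 2) :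
    (1 - x ^ (j + 1)) ^ (2 ^ (j + 1)) + (1 - (1 - x) ^ (j + 1)) ^ (2 ^ (j + 1)) ≤ 1 := by
  rcases h0.eq_or_lt with rfl | hx
  · simp
  have a := one_sub_pow_pow_le j x hx h1
  have b := one_sub_pow_mul_one_add_le (2 ^ (j + 1)) (x ^ (j + 1)) (by positivity)
    (pow_le_one₀ h0 (by linarith))
  have e : ((2 ^ (j + 1) : ℕ) : ℝ) * x ^ (j + 1) = (2 * x) ^ (j + 1) := by
    push_cast
    rw [mul_pow]
  rw [e] at b
  have hA0 : 0 < (2 * x) ^ (j + 1) := by positivity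
  have hA1 : (2 * x) ^ (j + 1) ≤ 1 := pow_le_one₀ (by linarith) (by linarith)
  generalize (2 * x) ^ (j + 1) = A at *
  have c : (1 - x ^ (j + 1)) ^ (2 ^ (j + 1)) ≤ 1 - A / 2 := by
    by_contra! h
    have := mul_lt_mul_of_pos_right h (show 0 < 1 + A by linarith)
    nlinarith
  linarith

lemma add_le_one (j : ℕ) (x : ℝ) (h0 : 0 ≤ x) (h1 : x ≤ 1) :
    (1 - x ^ (j + 1)) ^ (2 ^ (j + 1)) + (1 - (1 - x) ^ (j + 1)) ^ (2 ^ (j + 1)) ≤ 1 := by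
  rcases le_total x (1 / 2) with h | h
  · exact add_le_one_of_le_half j x h0 h
  · have := add_le_one_of_le_half j (1 - x) (by linarith) (by linarith)
    rw [sub_sub_cancel] at this
    linarith

end WuSiegel

/-- Wu–Siegel conjecture: for every positive integer `m`, with `M := 2^m`,
`1 - (1 - x^M)^(2^M) ≥ (1 - (1 - x)^M)^(2^M)` for all `x ∈ [0,1]`. -/
theorem stmt_2 (m : ℕ) (hm : 0 < m) (M : ℝ) (hM : M = (2 : ℝ) ^ (m : ℝ)) :
    ∀ x ∈ Set.Icc (0 : ℝ) 1,
      1 - (1 - x ^ M) ^ ((2 : ℝ) ^ M) ≥ (1 - (1 - x) ^ M) ^ ((2 : ℝ) ^ M) := by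
  intro x hx
  obtain ⟨j, hj⟩ : ∃ j : ℕ, 2 ^ m = j + 1 := Nat.exists_eq_succ_of_ne_zero (by positivity)
  have hMj : M = ((j + 1 : ℕ) : ℝ) := by
    rw [hM, Real.rpow_natCast, ← hj]
    push_cast
    rfl
  have hN : (2 : ℝ) ^ M = ((2 ^ (j + 1) : ℕ) : ℝ) := by
    rw [hMj, Real.rpow_natCast]
    push_cast
    rfl
  rw [hN, hMj]
  simp only [Real.rpow_natCast]
  linarith [WuSiegel.add_le_one j x hx.1 hx.2]
end

section
/- For all positive real numbers p and q and all x ∈ [0,1], one has (1 - (1 - x)^(2^p))^(2^q) ≥ 1 - (1 - x^(2^q))^(2^p). -/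
/-!
Put `a = 2 ^ p ≥ 1`, `b = 2 ^ q ≥ 1` and
`F x = (1 - (1 - x) ^ a) ^ b + (1 - x ^ b) ^ a - 1`; the claim is `0 ≤ F` on `[0, 1]`.
Here `F 0 = F 1 = 0`, and on `(0, 1)` the derivative is a positive factor times
`φ x = ((1 - (1 - x) ^ a) / x) ^ (b - 1) - ((1 - x ^ b) / (1 - x)) ^ (a - 1)`.
Both quotients are secant slopes ending at `1` of the convex functions `t ↦ t ^ a` and
`t ↦ t ^ b`, so the first decreases and the second increases in `x`, and `φ` is antitone
(`signFactor_antitone`). If `F c < 0`, the mean value theorem on `[0, c]` and `[c, 1]` gives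
`u < c < v` with `φ u < 0 < φ v`, a contradiction.
-/

/-- The factor of the derivative of `(1 - (1 - x) ^ a) ^ b + (1 - x ^ b) ^ a - 1` that
determines its sign on `(0, 1)`. -/
noncomputable def signFactor (a b x : ℝ) : ℝ :=
  ((1 - (1 - x) ^ a) / x) ^ (b - 1) - ((1 - x ^ b) / (1 - x)) ^ (a - 1)

/-- The secant slope of `t ↦ t ^ a` between `t` and `1` is monotone in `t`. -/
lemma secant_rpow_mono {a s t : ℝ} (ha : 1 ≤ a) (hs : 0 ≤ s) (hst : s ≤ t) (ht : t < 1) :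
    (1 - s ^ a) / (1 - s) ≤ (1 - t ^ a) / (1 - t) := by
  have h := (convexOn_rpow ha).secant_mono (a := 1) (x := s) (y := t)
    (Set.mem_Ici.2 zero_le_one) (Set.mem_Ici.2 hs) (Set.mem_Ici.2 (hs.trans hst))
    (hst.trans_lt ht).ne ht.ne hst
  simp only [Real.one_rpow] at h
  rwa [← neg_sub 1 (s ^ a), ← neg_sub 1 s, ← neg_sub 1 (t ^ a), ← neg_sub 1 t,
    neg_div_neg_eq, neg_div_neg_eq] at h

lemma signFactor_antitone {a b u v : ℝ} (ha : 1 ≤ a) (hb : 1 ≤ b) (hu : 0 < u) (huv : u ≤ v)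
    (hv : v < 1) : signFactor a b v ≤ signFactor a b u := by
  have h1 := secant_rpow_mono ha (s := 1 - v) (t := 1 - u) (by linarith) (by linarith)
    (by linarith)
  have h2 := secant_rpow_mono hb hu.le huv hv
  simp only [sub_sub_cancel] at h1
  have h3 : 0 ≤ (1 - (1 - v) ^ a) / v :=
    div_nonneg (sub_nonneg.2 (Real.rpow_le_one (by linarith) (by linarith) (by linarith)))
      (by linarith)
  have h4 : 0 ≤ (1 - u ^ b) / (1 - u) :=
    div_nonneg (sub_nonneg.2 (Real.rpow_le_one (by linarith) (by linarith) (by linarith)))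
      (by linarith)
  exact sub_le_sub (Real.rpow_le_rpow h3 h1 (by linarith))
    (Real.rpow_le_rpow h4 h2 (by linarith))

lemma hasDerivAt_signFactor {a b x : ℝ} (ha : 1 ≤ a) (hb : 1 ≤ b) (hx : 0 < x) (hx1 : x < 1) :
    HasDerivAt (fun x : ℝ => (1 - (1 - x) ^ a) ^ b + (1 - x ^ b) ^ a - 1)
      (a * b * x ^ (b - 1) * (1 - x) ^ (a - 1) * signFactor a b x) x := by
  have hy : 0 < 1 - x := by linarith
  have h1 : 0 ≤ 1 - (1 - x) ^ a :=
    sub_nonneg.2 (Real.rpow_le_one hy.le (by linarith) (by linarith))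
  have h2 : 0 ≤ 1 - x ^ b := sub_nonneg.2 (Real.rpow_le_one hx.le hx1.le (by linarith))
  have d1 := ((((hasDerivAt_id x).const_sub 1).rpow_const (p := a)
    (Or.inr ha)).const_sub 1).rpow_const (p := b) (Or.inr hb)
  have d2 := (((hasDerivAt_id x).rpow_const (p := b) (Or.inr hb)).const_sub 1).rpow_const
    (p := a) (Or.inr ha)
  refine ((d1.add d2).sub_const 1).congr_deriv ?_
  have e1 : x ^ (b - 1) ≠ 0 := (Real.rpow_pos_of_pos hx _).ne'
  have e2 : (1 - x) ^ (a - 1) ≠ 0 := (Real.rpow_pos_of_pos hy _).ne'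
  simp only [signFactor, id]
  rw [Real.div_rpow h1 hx.le, Real.div_rpow h2 hy.le]
  field_simp
  ring

lemma one_le_add_rpow {a b c : ℝ} (ha : 1 ≤ a) (hb : 1 ≤ b) (hc : c ∈ Set.Icc (0 : ℝ) 1) :
    0 ≤ (1 - (1 - c) ^ a) ^ b + (1 - c ^ b) ^ a - 1 := by
  have ha0 : 0 < a := by linarith
  have hb0 : 0 < b := by linarith
  set F : ℝ → ℝ := fun x => (1 - (1 - x) ^ a) ^ b + (1 - x ^ b) ^ a - 1 with hF
  have F0 : F 0 = 0 := by simp [hF, ha0.ne', hb0.ne']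
  have F1 : F 1 = 0 := by simp [hF, ha0.ne', hb0.ne']
  have hcont : Continuous F := by
    have k1 : Continuous fun x : ℝ => x ^ a := Real.continuous_rpow_const ha0.le
    have k2 : Continuous fun x : ℝ => x ^ b := Real.continuous_rpow_const hb0.le
    exact ((k2.comp (continuous_const.sub (k1.comp (continuous_const.sub continuous_id)))).add
      (k1.comp (continuous_const.sub k2))).sub continuous_const
  change 0 ≤ F c
  by_contra! hneg
  have hc0 : 0 < c := lt_of_le_of_ne hc.1 (by rintro rfl; linarith)
  have hc1 : c < 1 := lt_of_le_of_ne hc.2 (by rintro rfl; linarith)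
  obtain ⟨u, hu, eu⟩ := exists_hasDerivAt_eq_slope F _ hc0 hcont.continuousOn
    fun x hx => hasDerivAt_signFactor ha hb hx.1 (hx.2.trans hc1)
  obtain ⟨v, hv, ev⟩ := exists_hasDerivAt_eq_slope F _ hc1 hcont.continuousOn
    fun x hx => hasDerivAt_signFactor ha hb (hc0.trans hx.1) hx.2
  have hpos : ∀ x : ℝ, 0 < x → x < 1 → 0 < a * b * x ^ (b - 1) * (1 - x) ^ (a - 1) := by
    intro x h0 h1
    have : 0 < 1 - x := by linarith
    positivity
  have su : signFactor a b u < 0 := by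
    have : (F c - F 0) / (c - 0) < 0 := div_neg_of_neg_of_pos (by linarith) (by linarith)
    rw [← eu] at this
    exact (pos_iff_neg_of_mul_neg this).1 (hpos u hu.1 (hu.2.trans hc1))
  have sv : 0 < signFactor a b v := by
    have : 0 < (F 1 - F c) / (1 - c) := div_pos (by linarith) (by linarith)
    rw [← ev] at this
    exact (pos_iff_pos_of_mul_pos this).1 (hpos v (hc0.trans hv.1) hv.2)
  linarith [signFactor_antitone ha hb hu.1 (hu.2.trans hv.1).le hv.2]

/-- Continuous version of `10 ≽ 01`: for positive reals `p, q` and `x ∈ [0,1]`,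
`(1 - (1 - x)^(2^p))^(2^q) ≥ 1 - (1 - x^(2^q))^(2^p)`. -/
theorem stmt_3 (p q : ℝ) (hp : 0 < p) (hq : 0 < q) :
    ∀ x ∈ Set.Icc (0 : ℝ) 1,
      (1 - (1 - x) ^ ((2 : ℝ) ^ p)) ^ ((2 : ℝ) ^ q)
        ≥ 1 - (1 - x ^ ((2 : ℝ) ^ q)) ^ ((2 : ℝ) ^ p) := by
  intro x hx
  linarith [one_le_add_rpow (Real.one_le_rpow one_le_two hp.le)
    (Real.one_le_rpow one_le_two hq.le) hx]
end

section
/- The functions g(y) = y/ln(1-y) and h(y) = (1-y)/ln(y) are strictly convex on the open interval (0,1). -/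
/-!
Write `L = log y`. On `(0,1)` the second derivative of `h(y) = (1-y)/log y` is
`((1+y) L + 2(1-y)) / (y² L³)`. Since `L < 0`, its positivity amounts to
`log y < -2(1-y)/(1+y)` (`log_add_neg`), which holds because
`log y + 2(1-y)/(1+y)` has derivative `(1-y)²/(y(1+y)²) > 0` and vanishes at `y = 1`.
The convexity of `g` follows by the reflection `g(y) = h(1-y)`.
-/

lemma log_add_neg {y : ℝ} (h0 : 0 < y) (h1 : y < 1) :
    (1 + y) * Real.log y + 2 * (1 - y) < 0 := by
  have hd : ∀ x : ℝ, 0 < x → HasDerivAt (fun x => Real.log x + 2 * (1 - x) / (1 + x))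
      ((1 - x) ^ 2 / (x * (1 + x) ^ 2)) x := by
    intro x hx
    have hx' : 1 + x ≠ 0 := by positivity
    have h := (Real.hasDerivAt_log hx.ne').add
      ((((hasDerivAt_id x).const_sub 1).const_mul 2).div ((hasDerivAt_id x).const_add 1) hx')
    refine h.congr_deriv ?_
    simp only [id]
    field_simp
    ring
  have hm : StrictMonoOn (fun x => Real.log x + 2 * (1 - x) / (1 + x)) (Set.Ioc (0 : ℝ) 1) := by
    refine strictMonoOn_of_deriv_pos (convex_Ioc 0 1)
      (fun x hx => (hd x hx.1).continuousAt.continuousWithinAt) ?_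
    intro x hx
    rw [interior_Ioc] at hx
    rw [(hd x hx.1).deriv]
    have := hx.1
    have := sub_pos.2 hx.2
    positivity
  have h := hm ⟨h0, h1.le⟩ ⟨one_pos, le_rfl⟩ h1
  simp only [Real.log_one, sub_self, mul_zero, zero_div, add_zero] at h
  have hy : 0 < 1 + y := by positivity
  have h2 : (1 + y) * Real.log y + 2 * (1 - y)
      = (1 + y) * (Real.log y + 2 * (1 - y) / (1 + y)) := by
    field_simp
  rw [h2]
  exact mul_neg_of_pos_of_neg hy h

lemma strictConvexOn_one_sub_div_log :
    StrictConvexOn ℝ (Set.Ioo (0 : ℝ) 1) (fun y => (1 - y) / Real.log y) := by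
  have hd : ∀ x ∈ Set.Ioo (0 : ℝ) 1, HasDerivAt (fun y => (1 - y) / Real.log y)
      ((1 - Real.log x - x⁻¹) / Real.log x ^ 2) x := by
    intro x hx
    have hx0 := hx.1.ne'
    have hL := (Real.log_neg hx.1 hx.2).ne
    refine (((hasDerivAt_id x).const_sub 1).div (Real.hasDerivAt_log hx0) hL).congr_deriv ?_
    simp only [id]
    field_simp
    ring
  have hd2 : ∀ x ∈ Set.Ioo (0 : ℝ) 1,
      HasDerivAt (fun x => (1 - Real.log x - x⁻¹) / Real.log x ^ 2)
      (((1 + x) * Real.log x + 2 * (1 - x)) / (x ^ 2 * Real.log x ^ 3)) x := by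
    intro x hx
    have hx0 := hx.1.ne'
    have hL := (Real.log_neg hx.1 hx.2).ne
    have hl := Real.hasDerivAt_log hx0
    refine (((hl.const_sub 1).sub (hasDerivAt_inv hx0)).div (hl.pow 2)
      (pow_ne_zero 2 hL)).congr_deriv ?_
    simp only [Pi.sub_apply, Pi.pow_apply]
    field_simp
    ring
  refine strictConvexOn_of_deriv2_pos' (convex_Ioo 0 1)
    (fun x hx => (hd x hx).continuousAt.continuousWithinAt) ?_
  intro x hx
  have he : deriv (fun y => (1 - y) / Real.log y) =ᶠ[nhds x]
      fun x => (1 - Real.log x - x⁻¹) / Real.log x ^ 2 := by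
    filter_upwards [isOpen_Ioo.mem_nhds hx] with z hz using (hd z hz).deriv
  rw [Function.iterate_succ, Function.iterate_one, Function.comp_apply, he.deriv_eq,
    (hd2 x hx).deriv]
  have hL := Real.log_neg hx.1 hx.2
  exact div_pos_of_neg_of_neg (log_add_neg hx.1 hx.2)
    (mul_neg_of_pos_of_neg (pow_pos hx.1 2) (Odd.pow_neg (by decide) hL))

/-- `g(y) = y/ln(1-y)` and `h(y) = (1-y)/ln(y)` are strictly convex on `(0,1)`. -/
theorem stmt_4 :
    StrictConvexOn ℝ (Set.Ioo (0 : ℝ) 1) (fun y => y / Real.log (1 - y)) ∧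
    StrictConvexOn ℝ (Set.Ioo (0 : ℝ) 1) (fun y => (1 - y) / Real.log y) := by
  refine ⟨⟨convex_Ioo 0 1, ?_⟩, strictConvexOn_one_sub_div_log⟩
  intro x hx y hy hxy a b ha hb hab
  have h := strictConvexOn_one_sub_div_log.2 (x := 1 - x) (y := 1 - y)
    ⟨sub_pos.2 hx.2, sub_lt_self 1 hx.1⟩ ⟨sub_pos.2 hy.2, sub_lt_self 1 hy.1⟩
    (fun h => hxy (sub_right_injective h)) ha hb hab
  have e : a • (1 - x) + b • (1 - y) = 1 - (a • x + b • y) := by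
    simp only [smul_eq_mul]
    linear_combination hab
  simpa only [e, sub_sub_cancel] using h
end

section
/- For every y ∈ (0,1), the Wronskian g(y)·h'(y) − g'(y)·h(y) is nonzero, where g' and h' denote the derivatives of g and h. -/
/-!
Both `g` and `h` are negative on `(0,1)`, and the strict inequality `-log t < 1/t - 1`
for `0 < t < 1` gives `g' > 0` and `h' < 0` there. Since `g(y) = h(1 - y)`, the sign of `g'`
follows from that of `h'`. Hence `g h' > 0 > g' h`, and the Wronskian is strictly positive.
-/

noncomputable def gFun (y : ℝ) : ℝ := y / Real.log (1 - y)

noncomputable def hFun (y : ℝ) : ℝ := (1 - y) / Real.log y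

lemma hFun_neg {y : ℝ} (h0 : 0 < y) (h1 : y < 1) : hFun y < 0 :=
  div_neg_of_pos_of_neg (by linarith) (Real.log_neg h0 h1)

lemma gFun_eq (y : ℝ) : gFun y = hFun (1 - y) := by
  simp [gFun, hFun]

lemma deriv_hFun_neg {y : ℝ} (h0 : 0 < y) (h1 : y < 1) : deriv hFun y < 0 := by
  have hL := Real.log_neg h0 h1
  have hd : HasDerivAt hFun ((-1 * Real.log y - (1 - y) * y⁻¹) / Real.log y ^ 2) y :=
    ((hasDerivAt_id y).const_sub 1).div (Real.hasDerivAt_log h0.ne') hL.ne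
  rw [hd.deriv]
  -- The strict bound `log t < t - 1` at `t = y⁻¹` makes the numerator negative.
  have hlog := Real.log_lt_sub_one_of_pos (inv_pos.2 h0) (inv_ne_one.2 h1.ne)
  rw [Real.log_inv] at hlog
  have hy : y * y⁻¹ = 1 := mul_inv_cancel₀ h0.ne'
  exact div_neg_of_neg_of_pos (by linarith) (sq_pos_of_neg hL)

/-- For every `y ∈ (0,1)`, the Wronskian `g(y)·h'(y) − g'(y)·h(y)` is nonzero. -/
theorem stmt_7 (y : ℝ) (hy : y ∈ Set.Ioo (0 : ℝ) 1) :
    gFun y * deriv hFun y - deriv gFun y * hFun y ≠ 0 := by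
  obtain ⟨h0, h1⟩ := hy
  have hg : gFun y < 0 := by
    rw [gFun_eq]
    exact hFun_neg (by linarith) (by linarith)
  have hg' : 0 < deriv gFun y := by
    rw [funext gFun_eq, deriv_comp_const_sub]
    exact neg_pos.2 (deriv_hFun_neg (by linarith) (by linarith))
  have hgh := mul_pos_of_neg_of_neg hg (deriv_hFun_neg h0 h1)
  have hgh' := mul_neg_of_pos_of_neg hg' (hFun_neg h0 h1)
  exact ne_of_gt (by linarith)
end

section
/- For any real numbers a and b that are not both zero, the set { y ∈ (0,1) : a·g(y) + b·h(y) = 0 } contains at most two elements. -/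
/-- The numerator of the derivative of the ratio is negative. -/
lemma ratio_deriv_numerator_neg {y : ℝ} (h0 : 0 < y) (h1 : y < 1) :
    Real.log y * Real.log (1 - y) + (1 - y) * Real.log (1 - y) + y * Real.log y < 0 := by
  have hA : Real.log y < 0 := Real.log_neg h0 h1
  have hB : Real.log (1 - y) < 0 := Real.log_neg (by linarith) (by linarith)
  -- `x * (-ln x) < 1 - x` on `(0,1)`, from `ln x⁻¹ < x⁻¹ - 1`
  have key : ∀ x : ℝ, 0 < x → x < 1 → x * -Real.log x < 1 - x := by
    intro x hx hx1
    have h := Real.log_lt_sub_one_of_pos (inv_pos.mpr hx) (by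
      intro h
      rw [inv_eq_one] at h
      linarith)
    rw [Real.log_inv] at h
    have h2 := mul_lt_mul_of_pos_left h hx
    have h3 : x * (x⁻¹ - 1) = 1 - x := by field_simp
    linarith
  have k1 := key y h0 h1
  have k2 := key (1 - y) (by linarith) (by linarith)
  have m1 := mul_lt_mul_of_pos_right k1 (neg_pos.mpr hB)
  have m2 := mul_lt_mul_of_pos_right k2 (neg_pos.mpr hA)
  nlinarith

lemma ratio_strictAntiOn :
    StrictAntiOn (fun y : ℝ => y * Real.log y / ((1 - y) * Real.log (1 - y)))
      (Set.Ioo 0 1) := by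
  have hd : ∀ y ∈ Set.Ioo (0 : ℝ) 1,
      HasDerivAt (fun y : ℝ => y * Real.log y / ((1 - y) * Real.log (1 - y)))
        ((Real.log y * Real.log (1 - y) + (1 - y) * Real.log (1 - y) + y * Real.log y) /
          ((1 - y) * Real.log (1 - y)) ^ 2) y := by
    rintro y ⟨h0, h1⟩
    have hy : 1 - y ≠ 0 := (sub_pos.mpr h1).ne'
    have hB : Real.log (1 - y) < 0 := Real.log_neg (by linarith) (by linarith)
    have d1 := (hasDerivAt_id y).mul (Real.hasDerivAt_log h0.ne')
    have d2 : HasDerivAt (fun y : ℝ => 1 - y) (-1) y := (hasDerivAt_id y).const_sub 1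
    have d3 := d2.mul (d2.log hy)
    refine (d1.div d3 (mul_ne_zero hy hB.ne)).congr_deriv ?_
    simp only [id, Pi.mul_apply]
    have e1 : y * y⁻¹ = 1 := mul_inv_cancel₀ h0.ne'
    have e2 : (1 - y) * (-1 / (1 - y)) = -1 := by field_simp
    rw [e1, e2]
    congr 1
    ring
  apply strictAntiOn_of_deriv_neg (convex_Ioo 0 1)
  · exact fun y hy => (hd y hy).continuousAt.continuousWithinAt
  · intro y hy
    rw [interior_Ioo] at hy
    rw [(hd y hy).deriv]
    have hB : Real.log (1 - y) < 0 := Real.log_neg (by linarith [hy.2]) (by linarith [hy.1])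
    exact div_neg_of_neg_of_pos (ratio_deriv_numerator_neg hy.1 hy.2)
      (sq_pos_iff.mpr (mul_ne_zero (sub_pos.mpr hy.2).ne' hB.ne))

/-- For reals `a, b` not both zero, the set
`{ y ∈ (0,1) : a·g(y) + b·h(y) = 0 }` has at most two elements. -/
theorem stmt_8 (a b : ℝ) (hab : ¬(a = 0 ∧ b = 0)) :
    {y ∈ Set.Ioo (0 : ℝ) 1 | a * gFun y + b * hFun y = 0}.encard ≤ 2 := by
  have clear : ∀ y ∈ Set.Ioo (0 : ℝ) 1, a * gFun y + b * hFun y = 0 →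
      a * (y * Real.log y) + b * ((1 - y) * Real.log (1 - y)) = 0 := by
    rintro y ⟨h0, h1⟩ h
    have hA : Real.log y ≠ 0 := (Real.log_neg h0 h1).ne
    have hB : Real.log (1 - y) ≠ 0 := (Real.log_neg (by linarith) (by linarith)).ne
    unfold gFun hFun at h
    field_simp at h
    linarith
  have den : ∀ y ∈ Set.Ioo (0 : ℝ) 1, (1 - y) * Real.log (1 - y) ≠ 0 := by
    rintro y ⟨h0, h1⟩
    exact mul_ne_zero (sub_pos.mpr h1).ne' (Real.log_neg (by linarith) (by linarith)).ne
  refine le_trans (Set.encard_le_one_iff.mpr ?_) one_le_two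
  rintro x y ⟨hx, ex⟩ ⟨hy, ey⟩
  have cx := clear x hx ex
  have cy := clear y hy ey
  refine ratio_strictAntiOn.injOn hx hy ?_
  have ha : a ≠ 0 := by
    rintro rfl
    refine hab ⟨rfl, ?_⟩
    exact (mul_eq_zero.mp
      (by linarith : b * ((1 - x) * Real.log (1 - x)) = 0)).resolve_right (den x hx)
  rw [div_eq_div_iff (den x hx) (den y hy)]
  apply mul_left_cancel₀ ha
  linear_combination ((1 - y) * Real.log (1 - y)) * cx - ((1 - x) * Real.log (1 - x)) * cy
end

section
/- For every y ∈ (0,1), there exists a unique pair of real numbers (j, k) satisfying the two equations j·g(y) + k·h(y) = −1 and j·g'(y) + k·h'(y) = 0, where g' and h' are the derivatives of g and h. -/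
lemma one_sub_inv_lt_log {x : ℝ} (h0 : 0 < x) (h1 : x < 1) : 1 - x⁻¹ < Real.log x := by
  have h := Real.log_lt_sub_one_of_pos (inv_pos.2 h0) (by simpa using h1.ne)
  rw [Real.log_inv] at h
  linarith

lemma deriv_gFun_pos {y : ℝ} (h0 : 0 < y) (h1 : y < 1) : 0 < deriv gFun y := by
  have hl : Real.log (1 - y) < 0 := Real.log_neg (by linarith) (by linarith)
  have hx : (0 : ℝ) < 1 - y := by linarith
  have hd : HasDerivAt gFun _ y :=
    (hasDerivAt_id y).div (((hasDerivAt_id y).const_sub 1).log hx.ne') hl.ne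
  rw [hd.deriv]
  apply div_pos _ (by simpa using sq_pos_of_neg hl)
  have h := one_sub_inv_lt_log hx (by linarith)
  have e : y * (-1 / (1 - y)) = 1 - (1 - y)⁻¹ := by field_simp; ring
  simp only [id]
  rw [e]
  linarith

/-- For every `y ∈ (0,1)` there is a unique pair `(j, k)` with
`j·g(y) + k·h(y) = −1` and `j·g'(y) + k·h'(y) = 0`. -/
theorem stmt_9 (y : ℝ) (hy : y ∈ Set.Ioo (0 : ℝ) 1) :
    ∃! jk : ℝ × ℝ,
      jk.1 * gFun y + jk.2 * hFun y = -1 ∧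
      jk.1 * deriv gFun y + jk.2 * deriv hFun y = 0 := by
  obtain ⟨h0, h1⟩ := hy
  have hg' := deriv_gFun_pos h0 h1
  have hh' := deriv_hFun_neg h0 h1
  have hg : gFun y < 0 :=
    div_neg_of_pos_of_neg h0 (Real.log_neg (by linarith) (by linarith))
  have hh : hFun y < 0 := div_neg_of_pos_of_neg (by linarith) (Real.log_neg h0 h1)
  generalize gFun y = g at *
  generalize hFun y = h at *
  generalize deriv gFun y = g' at *
  generalize deriv hFun y = h' at *
  have hD : 0 < g * h' - h * g' := by
    have := mul_pos_of_neg_of_neg hg hh'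
    have := mul_neg_of_neg_of_pos hh hg'
    linarith
  refine ⟨(-h' / (g * h' - h * g'), g' / (g * h' - h * g')), ⟨?_, ?_⟩, ?_⟩
  · have := mul_inv_cancel₀ hD.ne'
    simp only [div_eq_mul_inv]
    linear_combination -this
  · simp only
    ring
  · rintro ⟨j, k⟩ ⟨e1, e2⟩
    simp only at e1 e2
    ext
    · rw [eq_div_iff hD.ne']
      linear_combination h' * e1 - h * e2
    · rw [eq_div_iff hD.ne']
      linear_combination g * e2 - g' * e1
end

section
/- There exists a tuple of functions (Y, Z, P, Q, J, K) from ℝ to ℝ such that Y, Z, P, Q are differentiable on ℝ, Y(t) ∈ (0,1) and Z(t) ∈ (0,1) for all t, Y(0) = Z(0) = 1/2, P(0) = Q(0) = 1, J(0) = K(0) = ln 2, and for every t ∈ ℝ: Y'(t) = ln(2)·P(t)·Y(t)·ln(Y(t)); Z'(t) = −ln(2)·Q(t)·Z(t)·ln(Z(t)); P'(t) = −ln(2)·(1 − J(t))·P(t)·Q(t); Q'(t) = ln(2)·(1 − K(t))·P(t)·Q(t); −1 = (Y(t)/ln(Z(t)))·J(t) + (Z(t)/ln(Y(t)))·K(t);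 and 0 = ((Z(t)·ln(Z(t)) + Y(t))/(Z(t)·ln(Z(t))²))·J(t) − ((Y(t)·ln(Y(t)) + Z(t))/(Y(t)·ln(Y(t))²))·K(t). Moreover, this tuple is unique: any two tuples of functions satisfying all of these conditions are equal. -/
/-!
Write `L = log 2`, `y = -log Y`, `z = -log Z`, `u = Y + Z - 1` and `v = P y Y - Q z Z`.

**Invariant curve.** The first constraint reads `y Y J + z Z K = y z`, and this is the only
combination of `J` and `K` that enters `v'`. Along every solution `(u, v)` therefore solves a
*homogeneous linear* system `u' = -L v`, `v' = α v + β u` with continuous coefficients, and it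
vanishes at `0`; hence `Y + Z = 1` and `P y Y = Q z Z` for all times (`eq_zero_of_linear`,
`IVPSol.invariants`).

**Reduction to one variable.** On the segment `Y = s`, `Z = 1 - s` the two constraints form a
nonsingular linear system for `(J, K)`, whose solution is `(jf s, kf s)` (`constraints_iff`).
Then `P = exp (Φ Y)` where `Φ' = (1 - jf s) / (z Z)`, and `Y` solves the scalar autonomous equation
`Y' = -L exp (Φ Y) y Y`. Equivalently `T (Y t) = t` for the time map `T` with
`T' = -1 / (L exp Φ y Y)`.

**Global existence.** The bound `jf s ≤ 1 / (1 - s)` gives `Φ' ≥ -4` on `(0, 1/2]`, so `P` stays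
bounded there, and `T` dominates a multiple of `log (-log s)` as `s → 0`; the symmetric bound on
`Q` controls `s → 1`. So `T` is a decreasing bijection from `(0, 1)` onto `ℝ`, and its inverse is
the unique solution.
-/

/-- Solution of the initial value problem (IVP 1 in the paper): four ODEs
coupled with two algebraic constraints. -/
def IVPSol (Y Z P Q J K : ℝ → ℝ) : Prop :=
  Differentiable ℝ Y ∧ Differentiable ℝ Z ∧ Differentiable ℝ P ∧ Differentiable ℝ Q ∧
  (∀ t, Y t ∈ Set.Ioo (0 : ℝ) 1) ∧ (∀ t, Z t ∈ Set.Ioo (0 : ℝ) 1) ∧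
  Y 0 = 1 / 2 ∧ Z 0 = 1 / 2 ∧ P 0 = 1 ∧ Q 0 = 1 ∧
  J 0 = Real.log 2 ∧ K 0 = Real.log 2 ∧
  (∀ t, deriv Y t = Real.log 2 * P t * Y t * Real.log (Y t)) ∧
  (∀ t, deriv Z t = -(Real.log 2) * Q t * Z t * Real.log (Z t)) ∧
  (∀ t, deriv P t = -(Real.log 2) * (1 - J t) * P t * Q t) ∧
  (∀ t, deriv Q t = Real.log 2 * (1 - K t) * P t * Q t) ∧
  (∀ t, -1 = Y t / Real.log (Z t) * J t + Z t / Real.log (Y t) * K t) ∧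
  (∀ t, 0 = (Z t * Real.log (Z t) + Y t) / (Z t * (Real.log (Z t)) ^ 2) * J t
          - (Y t * Real.log (Y t) + Z t) / (Y t * (Real.log (Y t)) ^ 2) * K t)

open Set Filter Topology

noncomputable section

/-! ### The constraints on the segment `Y + Z = 1` -/

/-- The function `s ↦ -log s`, positive on `(0, 1)`. -/
def ell (s : ℝ) : ℝ := -Real.log s

/-- The determinant of the constraint system at `Y = s`, `Z = 1 - s`, up to the factor
`1 / (y z)²`. -/
def dt (s : ℝ) : ℝ := ell (1 - s) * (1 - s) + ell s * s - ell s * ell (1 - s)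

/-- The value of `J` forced by the constraints at `Y = s`, `Z = 1 - s`. -/
def jf (s : ℝ) : ℝ := ell (1 - s) ^ 2 * ((1 - s) - ell s * s) / (s * dt s)

/-- The value of `K` forced by the constraints at `Y = s`, `Z = 1 - s`: the system is symmetric
under exchanging `Y` with `Z` and `J` with `K`. -/
def kf (s : ℝ) : ℝ := jf (1 - s)

lemma one_sub_mem {s : ℝ} (hs : s ∈ Ioo (0 : ℝ) 1) : 1 - s ∈ Ioo (0 : ℝ) 1 :=
  ⟨by linarith [hs.2], by linarith [hs.1]⟩

lemma one_sub_lt_ell {s : ℝ} (hs : s ∈ Ioo (0 : ℝ) 1) : 1 - s < ell s := by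
  have := Real.log_lt_sub_one_of_pos hs.1 hs.2.ne
  unfold ell; linarith

lemma ell_pos {s : ℝ} (hs : s ∈ Ioo (0 : ℝ) 1) : 0 < ell s := by
  linarith [one_sub_lt_ell hs, hs.2]

lemma ell_mul_lt {s : ℝ} (hs : s ∈ Ioo (0 : ℝ) 1) : ell s * s < 1 - s := by
  have h0 := hs.1
  have h1 : s⁻¹ ≠ 1 := by
    intro h
    rw [inv_eq_one] at h
    exact hs.2.ne h
  have h := Real.log_lt_sub_one_of_pos (inv_pos.2 h0) h1
  rw [Real.log_inv] at h
  have h2 := mul_lt_mul_of_pos_right h h0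
  rw [sub_mul, inv_mul_cancel₀ h0.ne'] at h2
  unfold ell; linarith

lemma dt_pos {s : ℝ} (hs : s ∈ Ioo (0 : ℝ) 1) : 0 < dt s := by
  have hs' := one_sub_mem hs
  have h1 := mul_pos (ell_pos hs') (sub_pos.2 (ell_mul_lt hs))
  have h2 := mul_pos (ell_pos hs) (sub_pos.2 (ell_mul_lt hs'))
  have : dt s = ell (1 - s) * (1 - s - ell s * s)
      + ell s * (1 - (1 - s) - ell (1 - s) * (1 - s)) := by
    unfold dt; ring
  linarith

lemma dt_symm (s : ℝ) : dt (1 - s) = dt s := by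
  unfold dt; rw [sub_sub_cancel]; ring

lemma kf_eq (s : ℝ) :
    kf s = ell s ^ 2 * (s - ell (1 - s) * (1 - s)) / ((1 - s) * dt s) := by
  unfold kf jf; rw [dt_symm, sub_sub_cancel]

lemma jf_pos {s : ℝ} (hs : s ∈ Ioo (0 : ℝ) 1) : 0 < jf s :=
  div_pos (mul_pos (pow_pos (ell_pos (one_sub_mem hs)) 2) (sub_pos.2 (ell_mul_lt hs)))
    (mul_pos hs.1 (dt_pos hs))

/-- The first constraint, cleared of denominators. -/
lemma jf_kf {s : ℝ} (hs : s ∈ Ioo (0 : ℝ) 1) :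
    ell s * s * jf s + ell (1 - s) * (1 - s) * kf s = ell s * ell (1 - s) := by
  have h0 := hs.1.ne'
  have h1 := (one_sub_mem hs).1.ne'
  have hd := (dt_pos hs).ne'
  rw [kf_eq, jf]
  field_simp
  unfold dt; ring

lemma constraints_iff {s J K : ℝ} (hs : s ∈ Ioo (0 : ℝ) 1) :
    (-1 = s / Real.log (1 - s) * J + (1 - s) / Real.log s * K ∧
      0 = ((1 - s) * Real.log (1 - s) + s) / ((1 - s) * Real.log (1 - s) ^ 2) * J
        - (s * Real.log s + (1 - s)) / (s * Real.log s ^ 2) * K) ↔ J = jf s ∧ K = kf s := by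
  have h0 := hs.1.ne'
  have h1 := (one_sub_mem hs).1.ne'
  have hd := (dt_pos hs).ne'
  have hy := (ell_pos hs).ne'
  have hz := (ell_pos (one_sub_mem hs)).ne'
  have ey : Real.log s = -ell s := by simp [ell]
  have ez : Real.log (1 - s) = -ell (1 - s) := by simp [ell]
  rw [ey, ez, kf_eq, jf]
  have hdt : dt s = ell (1 - s) * (1 - s) + ell s * s - ell s * ell (1 - s) := rfl
  generalize dt s = d at *
  generalize ell s = y at *
  generalize ell (1 - s) = z at *
  constructor
  · rintro ⟨e1, e2⟩
    field_simp at e1 e2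
    have e1' : y * s * J + z * (1 - s) * K = y * z := by
      linear_combination e1
    have e2' : s * y ^ 2 * (s - z * (1 - s)) * J = (1 - s) * z ^ 2 * (1 - s - y * s) * K := by
      linear_combination -e2
    constructor
    · rw [eq_div_iff (mul_ne_zero h0 hd)]
      apply mul_left_cancel₀ hy
      rw [hdt]
      linear_combination (z * (1 - s - y * s)) * e1' + e2'
    · rw [eq_div_iff (mul_ne_zero h1 hd)]
      apply mul_left_cancel₀ hz
      rw [hdt]
      linear_combination (y * (s - z * (1 - s))) * e1' - e2'
  · rintro ⟨rfl, rfl⟩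
    constructor
    · field_simp
      rw [hdt]; ring
    · field_simp
      ring

/-- By the first constraint `jf s ≤ z / s`, and `z ≤ s / (1 - s)`. -/
lemma jf_le {s : ℝ} (hs : s ∈ Ioo (0 : ℝ) 1) : jf s * (1 - s) ≤ 1 := by
  have hs' := one_sub_mem hs
  have h := jf_kf hs
  have hk : 0 < ell (1 - s) * (1 - s) * kf s :=
    mul_pos (mul_pos (ell_pos hs') hs'.1) (jf_pos hs')
  have h1 : s * jf s ≤ ell (1 - s) := by
    have : ell s * (s * jf s) ≤ ell s * ell (1 - s) := by nlinarith
    exact le_of_mul_le_mul_left this (ell_pos hs)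
  have h2 := ell_mul_lt hs'
  have h3 := mul_le_mul_of_nonneg_right h1 hs'.1.le
  have : s * (jf s * (1 - s)) ≤ s * 1 := by nlinarith
  exact le_of_mul_le_mul_left this hs.1

/-- The logarithmic derivative of `P` with respect to `Y` along the segment `Y + Z = 1`. -/
def phi (s : ℝ) : ℝ := (1 - jf s) / (ell (1 - s) * (1 - s))

lemma phi_ge {s : ℝ} (hs : s ∈ Ioo (0 : ℝ) 1) (h2 : s ≤ 1 / 2) : -4 ≤ phi s := by
  have hs' := one_sub_mem hs
  have hz := one_sub_lt_ell hs'
  have hj := jf_le hs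
  have hj' : jf s - 1 ≤ 2 * s := by
    by_contra! hc
    nlinarith [mul_pos (sub_pos.2 hc) hs'.1, mul_nonneg hs.1.le (sub_nonneg.2 h2)]
  have h0 := hs.1
  unfold phi
  rw [le_div_iff₀ (mul_pos (ell_pos hs') hs'.1)]
  nlinarith [ell_pos hs']

lemma half_mem : (1 / 2 : ℝ) ∈ Ioo (0 : ℝ) 1 := by norm_num

lemma continuousAt_ell {s : ℝ} (hs : s ≠ 0) : ContinuousAt ell s :=
  (Real.continuousAt_log hs).neg

lemma continuousAt_ell_one_sub {s : ℝ} (hs : 1 - s ≠ 0) :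
    ContinuousAt (fun x => ell (1 - x)) s :=
  ContinuousAt.comp (f := fun x : ℝ => 1 - x) (continuousAt_ell hs) (by fun_prop)

lemma continuousAt_phi {s : ℝ} (hs : s ∈ Ioo (0 : ℝ) 1) : ContinuousAt phi s := by
  have hs' := one_sub_mem hs
  have c1 := continuousAt_ell hs.1.ne'
  have c2 := continuousAt_ell_one_sub hs'.1.ne'
  have cd : ContinuousAt dt s := by unfold dt; fun_prop
  have cj : ContinuousAt jf s := by
    unfold jf
    refine ContinuousAt.div (by fun_prop) (by fun_prop) (mul_pos hs.1 (dt_pos hs)).ne'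
  unfold phi
  exact ContinuousAt.div (by fun_prop) (by fun_prop) (mul_pos (ell_pos hs') hs'.1).ne'

lemma hasDerivAt_ell {s : ℝ} (hs : s ∈ Ioo (0 : ℝ) 1) : HasDerivAt ell (-s⁻¹) s :=
  (Real.hasDerivAt_log hs.1.ne').neg

lemma hasDerivAt_log_ell {s : ℝ} (hs : s ∈ Ioo (0 : ℝ) 1) :
    HasDerivAt (fun x => Real.log (ell x)) (-(1 / (ell s * s))) s := by
  have h := (hasDerivAt_ell hs).log (ell_pos hs).ne'
  refine HasDerivAt.congr_deriv h (Eq.symm ?_)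
  have := (ell_pos hs).ne'
  have := hs.1.ne'
  field_simp

lemma hasDerivAt_one_sub (s : ℝ) : HasDerivAt (fun x : ℝ => 1 - x) (-1) s := by
  simpa using (hasDerivAt_id s).const_sub 1

lemma hasDerivAt_log_ell_one_sub {s : ℝ} (hs : s ∈ Ioo (0 : ℝ) 1) :
    HasDerivAt (fun x => Real.log (ell (1 - x))) (1 / (ell (1 - s) * (1 - s))) s := by
  have h := (hasDerivAt_log_ell (one_sub_mem hs)).comp s (hasDerivAt_one_sub s)
  refine HasDerivAt.congr_deriv h (Eq.symm ?_)
  ring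

/-! ### Antiderivatives, the momentum potential and the time map -/

lemma exists_antideriv {f : ℝ → ℝ} (hf : ∀ s ∈ Ioo (0 : ℝ) 1, ContinuousAt f s) :
    ∃ F : ℝ → ℝ, F (1 / 2) = 0 ∧ ∀ s ∈ Ioo (0 : ℝ) 1, HasDerivAt F (f s) s := by
  refine ⟨fun x => ∫ t in (1 / 2 : ℝ)..x, f t, by simp, fun s hs => ?_⟩
  have hc : ContinuousOn f (Ioo 0 1) := fun x hx => (hf x hx).continuousWithinAt
  apply intervalIntegral.integral_hasDerivAt_right
  · exact (hc.mono (ordConnected_Ioo.uIcc_subset half_mem hs)).intervalIntegrable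
  · exact hc.stronglyMeasurableAtFilter isOpen_Ioo s hs
  · exact hf s hs

/-- The logarithm of `P` as a function of `Y`. -/
def Phi : ℝ → ℝ := Classical.choose (exists_antideriv fun _ hs => continuousAt_phi hs)

lemma Phi_half : Phi (1 / 2) = 0 :=
  (Classical.choose_spec (exists_antideriv fun _ hs => continuousAt_phi hs)).1

lemma hasDerivAt_Phi {s : ℝ} (hs : s ∈ Ioo (0 : ℝ) 1) : HasDerivAt Phi (phi s) s :=
  (Classical.choose_spec (exists_antideriv fun _ hs => continuousAt_phi hs)).2 s hs

/-- The speed `-dY/dt` as a function of `Y`. -/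
def speed (s : ℝ) : ℝ := Real.log 2 * Real.exp (Phi s) * (ell s * s)

lemma log_two_pos : 0 < Real.log 2 := Real.log_pos one_lt_two

lemma speed_pos {s : ℝ} (hs : s ∈ Ioo (0 : ℝ) 1) : 0 < speed s :=
  mul_pos (mul_pos log_two_pos (Real.exp_pos _)) (mul_pos (ell_pos hs) hs.1)

lemma continuousAt_neg_inv_speed {s : ℝ} (hs : s ∈ Ioo (0 : ℝ) 1) :
    ContinuousAt (fun s => -(speed s)⁻¹) s := by
  have c1 := continuousAt_ell hs.1.ne'
  have c2 := (hasDerivAt_Phi hs).continuousAt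
  have : ContinuousAt speed s := by unfold speed; fun_prop
  exact (this.inv₀ (speed_pos hs).ne').neg

/-- The time at which the solution satisfies `Y = s`. -/
def T : ℝ → ℝ := Classical.choose (exists_antideriv fun _ hs => continuousAt_neg_inv_speed hs)

lemma T_half : T (1 / 2) = 0 :=
  (Classical.choose_spec (exists_antideriv fun _ hs => continuousAt_neg_inv_speed hs)).1

lemma hasDerivAt_T {s : ℝ} (hs : s ∈ Ioo (0 : ℝ) 1) : HasDerivAt T (-(speed s)⁻¹) s :=
  (Classical.choose_spec (exists_antideriv fun _ hs => continuousAt_neg_inv_speed hs)).2 s hs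

/-- The logarithm of `Q` as a function of `Y`, from the relation `P y Y = Q z Z`. -/
def Psi (s : ℝ) : ℝ :=
  Phi s + (Real.log (ell s) + Real.log s) - (Real.log (ell (1 - s)) + Real.log (1 - s))

lemma exp_Psi {s : ℝ} (hs : s ∈ Ioo (0 : ℝ) 1) :
    Real.exp (Psi s) * (ell (1 - s) * (1 - s)) = Real.exp (Phi s) * (ell s * s) := by
  have hs' := one_sub_mem hs
  have hz := ell_pos hs'
  unfold Psi
  rw [Real.exp_sub, Real.exp_add, Real.exp_add, Real.exp_add, Real.exp_log hs.1,
    Real.exp_log (ell_pos hs), Real.exp_log hs'.1, Real.exp_log hz]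
  have := hs'.1.ne'
  field_simp

lemma Psi_half : Psi (1 / 2) = 0 := by
  unfold Psi; rw [Phi_half]; norm_num

/-- The first constraint makes the derivative of `Psi` the mirror image of that of `Phi`. -/
lemma hasDerivAt_Psi {s : ℝ} (hs : s ∈ Ioo (0 : ℝ) 1) : HasDerivAt Psi (-phi (1 - s)) s := by
  have hs' := one_sub_mem hs
  have hl := (Real.hasDerivAt_log hs'.1.ne').comp s (hasDerivAt_one_sub s)
  have h := ((hasDerivAt_Phi hs).add ((hasDerivAt_log_ell hs).add
    (Real.hasDerivAt_log hs.1.ne'))).sub ((hasDerivAt_log_ell_one_sub hs).add hl)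
  refine HasDerivAt.congr_deriv h (Eq.symm ?_)
  have hjk := jf_kf hs
  have := hs.1.ne'
  have := hs'.1.ne'
  have := (ell_pos hs).ne'
  have := (ell_pos hs').ne'
  unfold phi
  rw [sub_sub_cancel]
  unfold kf at hjk
  field_simp
  linear_combination hjk

/-! ### The time map is a decreasing bijection `(0, 1) → ℝ` -/

lemma Phi_le {s : ℝ} (hs : s ∈ Ioo (0 : ℝ) 1) (h2 : s ≤ 1 / 2) : Phi s ≤ 2 := by
  have hd : ∀ x ∈ Ioc (0 : ℝ) (1 / 2), HasDerivAt (fun x => Phi x + 4 * x) (phi x + 4 * 1) x :=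
    fun x hx => (hasDerivAt_Phi ⟨hx.1, by linarith [hx.2]⟩).add ((hasDerivAt_id x).const_mul 4)
  have hm : MonotoneOn (fun x => Phi x + 4 * x) (Ioc (0 : ℝ) (1 / 2)) := by
    apply monotoneOn_of_deriv_nonneg (convex_Ioc _ _)
    · exact fun x hx => (hd x hx).continuousAt.continuousWithinAt
    · exact fun x hx => (hd x (interior_subset hx)).differentiableAt.differentiableWithinAt
    · intro x hx
      have hx := interior_subset hx
      rw [(hd x hx).deriv]
      linarith [phi_ge ⟨hx.1, by linarith [hx.2]⟩ hx.2]
  have := hm ⟨hs.1, h2⟩ ⟨by norm_num, le_refl _⟩ h2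
  simp only [Phi_half] at this
  linarith [hs.1]

lemma Psi_le {s : ℝ} (hs : s ∈ Ioo (0 : ℝ) 1) (h2 : 1 / 2 ≤ s) : Psi s ≤ 2 := by
  have hd : ∀ x ∈ Ico (1 / 2 : ℝ) 1,
      HasDerivAt (fun x => Psi x - 4 * x) (-phi (1 - x) - 4 * 1) x :=
    fun x hx => (hasDerivAt_Psi ⟨by linarith [hx.1], hx.2⟩).sub ((hasDerivAt_id x).const_mul 4)
  have hm : AntitoneOn (fun x => Psi x - 4 * x) (Ico (1 / 2 : ℝ) 1) := by
    apply antitoneOn_of_deriv_nonpos (convex_Ico _ _)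
    · exact fun x hx => (hd x hx).continuousAt.continuousWithinAt
    · exact fun x hx => (hd x (interior_subset hx)).differentiableAt.differentiableWithinAt
    · intro x hx
      have hx := interior_subset hx
      rw [(hd x hx).deriv]
      linarith [phi_ge (s := 1 - x) ⟨by linarith [hx.2], by linarith [hx.1]⟩ (by linarith [hx.1])]
  have := hm ⟨le_refl _, by norm_num⟩ ⟨h2, hs.2⟩ h2
  simp only [Psi_half] at this
  linarith [hs.2]

/-- A lower bound for `1 / (L P)` on `(0, 1/2]` and `1 / (L Q)` on `[1/2, 1)`. -/
def cst : ℝ := (Real.log 2 * Real.exp 2)⁻¹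

lemma cst_pos : 0 < cst := inv_pos.2 (mul_pos log_two_pos (Real.exp_pos _))

lemma cst_mul_le {a b : ℝ} (ha : a ≤ 2) (hb : 0 < b) :
    cst * (1 / b) ≤ (Real.log 2 * Real.exp a * b)⁻¹ := by
  unfold cst
  rw [one_div, ← mul_inv]
  have := log_two_pos
  have := Real.exp_le_exp.2 ha
  exact inv_anti₀ (by positivity) (by gcongr)

lemma T_ge {s : ℝ} (hs : s ∈ Ioo (0 : ℝ) 1) (h2 : s ≤ 1 / 2) :
    cst * (Real.log (ell s) - Real.log (ell (1 / 2))) ≤ T s := by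
  have hd : ∀ x ∈ Ioc (0 : ℝ) (1 / 2), HasDerivAt (fun x => T x - cst * Real.log (ell x))
      (-(speed x)⁻¹ - cst * (-(1 / (ell x * x)))) x := by
    intro x hx
    have hx' : x ∈ Ioo (0 : ℝ) 1 := ⟨hx.1, by linarith [hx.2]⟩
    exact (hasDerivAt_T hx').sub ((hasDerivAt_log_ell hx').const_mul _)
  have hm : AntitoneOn (fun x => T x - cst * Real.log (ell x)) (Ioc (0 : ℝ) (1 / 2)) := by
    apply antitoneOn_of_deriv_nonpos (convex_Ioc _ _)
    · exact fun x hx => (hd x hx).continuousAt.continuousWithinAt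
    · exact fun x hx => (hd x (interior_subset hx)).differentiableAt.differentiableWithinAt
    · intro x hx
      have hx := interior_subset hx
      have hx' : x ∈ Ioo (0 : ℝ) 1 := ⟨hx.1, by linarith [hx.2]⟩
      rw [(hd x hx).deriv]
      have := cst_mul_le (Phi_le hx' hx.2) (mul_pos (ell_pos hx') hx.1)
      unfold speed
      linarith
  have := hm ⟨hs.1, h2⟩ ⟨by norm_num, le_refl _⟩ h2
  simp only [T_half] at this
  linarith

lemma T_le {s : ℝ} (hs : s ∈ Ioo (0 : ℝ) 1) (h2 : 1 / 2 ≤ s) :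
    T s ≤ -(cst * (Real.log (ell (1 - s)) - Real.log (ell (1 / 2)))) := by
  have hd : ∀ x ∈ Ico (1 / 2 : ℝ) 1, HasDerivAt (fun x => T x + cst * Real.log (ell (1 - x)))
      (-(speed x)⁻¹ + cst * (1 / (ell (1 - x) * (1 - x)))) x := by
    intro x hx
    have hx' : x ∈ Ioo (0 : ℝ) 1 := ⟨by linarith [hx.1], hx.2⟩
    exact (hasDerivAt_T hx').add ((hasDerivAt_log_ell_one_sub hx').const_mul _)
  have hm : AntitoneOn (fun x => T x + cst * Real.log (ell (1 - x))) (Ico (1 / 2 : ℝ) 1) := by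
    apply antitoneOn_of_deriv_nonpos (convex_Ico _ _)
    · exact fun x hx => (hd x hx).continuousAt.continuousWithinAt
    · exact fun x hx => (hd x (interior_subset hx)).differentiableAt.differentiableWithinAt
    · intro x hx
      have hx := interior_subset hx
      have hx' : x ∈ Ioo (0 : ℝ) 1 := ⟨by linarith [hx.1], hx.2⟩
      have hx'' := one_sub_mem hx'
      rw [(hd x hx).deriv]
      have := cst_mul_le (Psi_le hx' hx.1) (mul_pos (ell_pos hx'') hx''.1)
      rw [mul_assoc, exp_Psi hx', ← mul_assoc] at this
      unfold speed
      linarith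
  have := hm ⟨le_refl _, by norm_num⟩ ⟨h2, hs.2⟩ h2
  simp only [T_half] at this
  norm_num at this ⊢
  linarith

lemma T_strictAnti : StrictAntiOn T (Ioo 0 1) := by
  apply strictAntiOn_of_deriv_neg (convex_Ioo _ _)
  · exact fun x hx => (hasDerivAt_T hx).continuousAt.continuousWithinAt
  · intro x hx
    have hx := interior_subset hx
    rw [(hasDerivAt_T hx).deriv]
    exact neg_neg_of_pos (inv_pos.2 (speed_pos hx))

/-- The point `s` with `log (-log s) = x`; it parametrizes `(0, 1)`. -/
def pt (x : ℝ) : ℝ := Real.exp (-Real.exp x)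

lemma pt_mem (x : ℝ) : pt x ∈ Ioo (0 : ℝ) 1 :=
  ⟨Real.exp_pos _, by unfold pt; rw [Real.exp_lt_one_iff]; linarith [Real.exp_pos x]⟩

lemma log_ell_pt (x : ℝ) : Real.log (ell (pt x)) = x := by simp [pt, ell]

lemma pt_le {x : ℝ} (hx : Real.log (ell (1 / 2)) ≤ x) : pt x ≤ 1 / 2 := by
  have h := Real.exp_le_exp.2 hx
  rw [Real.exp_log (ell_pos half_mem)] at h
  unfold pt
  rw [← Real.le_log_iff_exp_le (by norm_num)]
  unfold ell at h
  linarith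

lemma T_surj (t : ℝ) : ∃ s ∈ Ioo (0 : ℝ) 1, T s = t := by
  set c := Real.log (ell (1 / 2)) with hc
  -- this `x` makes both bounds `T_ge` and `T_le` reach `|t|`
  set x := c + |t| / cst with hx
  have hcx : c ≤ x := by have := div_nonneg (abs_nonneg t) cst_pos.le; linarith
  have hv : cst * (x - c) = |t| := by
    rw [hx, add_sub_cancel_left, mul_div_cancel₀ _ cst_pos.ne']
  have hp := pt_le hcx
  have hm := pt_mem x
  have hm' := one_sub_mem hm
  have h1 : t ≤ T (pt x) := by
    have := T_ge hm hp
    rw [log_ell_pt, hv] at this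
    exact (le_abs_self t).trans this
  have h2 : T (1 - pt x) ≤ t := by
    have := T_le hm' (by linarith)
    rw [sub_sub_cancel, log_ell_pt, hv] at this
    linarith [neg_abs_le t]
  have hcont : ContinuousOn T (Icc (pt x) (1 - pt x)) := fun s hs =>
    (hasDerivAt_T ⟨hm.1.trans_le hs.1, hs.2.trans_lt hm'.2⟩).continuousAt.continuousWithinAt
  obtain ⟨s, hs, e⟩ := intermediate_value_Icc' (by linarith) hcont ⟨h2, h1⟩
  exact ⟨s, ⟨hm.1.trans_le hs.1, hs.2.trans_lt hm'.2⟩, e⟩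

/-- The solution component `Y`: the inverse of the time map. -/
def Ysol (t : ℝ) : ℝ := Classical.choose (T_surj t)

lemma Ysol_mem (t : ℝ) : Ysol t ∈ Ioo (0 : ℝ) 1 := (Classical.choose_spec (T_surj t)).1

lemma T_Ysol (t : ℝ) : T (Ysol t) = t := (Classical.choose_spec (T_surj t)).2

lemma eq_Ysol {s t : ℝ} (hs : s ∈ Ioo (0 : ℝ) 1) (h : T s = t) : s = Ysol t :=
  T_strictAnti.injOn hs (Ysol_mem t) (h.trans (T_Ysol t).symm)

lemma Ysol_zero : Ysol 0 = 1 / 2 := (eq_Ysol half_mem T_half).symm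

lemma Ysol_strictAnti : StrictAnti Ysol := by
  intro a b hab
  by_contra! h
  have := T_strictAnti.antitoneOn (Ysol_mem a) (Ysol_mem b) h
  rw [T_Ysol, T_Ysol] at this
  linarith

lemma range_Ysol : range Ysol = Ioo 0 1 := by
  ext s
  exact ⟨by rintro ⟨t, rfl⟩; exact Ysol_mem t, fun hs => ⟨T s, (eq_Ysol hs rfl).symm⟩⟩

lemma continuous_Ysol : Continuous Ysol := by
  rw [continuous_iff_continuousAt]
  intro t
  -- a monotone function whose range is a neighbourhood of the value is continuous
  have h : ContinuousAt (fun t => -Ysol t) t := by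
    have hm : StrictMono fun t => -Ysol t := fun a b hab => neg_lt_neg (Ysol_strictAnti hab)
    apply (hm.strictMonoOn univ).continuousAt_of_image_mem_nhds univ_mem
    have : (fun t => -Ysol t) '' univ = Ioo (-1) 0 := by
      rw [show (fun t => -Ysol t) = Neg.neg ∘ Ysol from rfl, image_comp, image_univ, range_Ysol]
      simp
    rw [this]
    exact Ioo_mem_nhds (by linarith [(Ysol_mem t).2]) (by linarith [(Ysol_mem t).1])
  rw [show Ysol = -fun t => -Ysol t by ext; simp]
  exact h.neg

lemma hasDerivAt_Ysol (t : ℝ) : HasDerivAt Ysol (-speed (Ysol t)) t := by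
  have h := (hasDerivAt_T (Ysol_mem t)).of_local_left_inverse continuous_Ysol.continuousAt
    (neg_ne_zero.2 (inv_ne_zero (speed_pos (Ysol_mem t)).ne')) (.of_forall T_Ysol)
  refine HasDerivAt.congr_deriv h (Eq.symm ?_)
  rw [inv_neg, inv_inv]

lemma log_two_lt_one : Real.log 2 < 1 := by linarith [Real.log_two_lt_d9]

lemma jf_half : jf (1 / 2) = Real.log 2 := by
  have h := log_two_lt_one
  have e : ell (1 / 2) = Real.log 2 := by simp [ell]
  have e1 : (1 : ℝ) - 1 / 2 = 1 / 2 := by norm_num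
  unfold jf dt
  rw [e1, e]
  have h1 : 1 - Real.log 2 ≠ 0 := by linarith
  have h2 := log_two_pos.ne'
  have : Real.log 2 * (1 / 2) + Real.log 2 * (1 / 2) - Real.log 2 * Real.log 2
      = Real.log 2 * (1 - Real.log 2) := by ring
  rw [this]
  field_simp

lemma exists_sol : IVPSol Ysol (fun t => 1 - Ysol t) (fun t => Real.exp (Phi (Ysol t)))
    (fun t => Real.exp (Psi (Ysol t))) (fun t => jf (Ysol t)) (fun t => kf (Ysol t)) := by
  have hZ (t : ℝ) : HasDerivAt (fun t => 1 - Ysol t) (-(-speed (Ysol t))) t :=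
    (hasDerivAt_Ysol t).const_sub 1
  have hP (t : ℝ) := ((hasDerivAt_Phi (Ysol_mem t)).comp t (hasDerivAt_Ysol t)).exp
  have hQ (t : ℝ) := ((hasDerivAt_Psi (Ysol_mem t)).comp t (hasDerivAt_Ysol t)).exp
  simp only [Function.comp_def] at hP hQ
  have hE (t : ℝ) : speed (Ysol t) = Real.log 2 *
      (Real.exp (Psi (Ysol t)) * (ell (1 - Ysol t) * (1 - Ysol t))) := by
    rw [exp_Psi (Ysol_mem t), ← mul_assoc]; rfl
  refine ⟨fun t => (hasDerivAt_Ysol t).differentiableAt, fun t => (hZ t).differentiableAt,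
    fun t => (hP t).differentiableAt, fun t => (hQ t).differentiableAt, Ysol_mem,
    fun t => one_sub_mem (Ysol_mem t), Ysol_zero, ?_, ?_, ?_, ?_, ?_, ?_, ?_, ?_, ?_, ?_, ?_⟩
  · simp only [Ysol_zero]; norm_num
  · simp only [Ysol_zero, Phi_half, Real.exp_zero]
  · simp only [Ysol_zero, Psi_half, Real.exp_zero]
  · simp only [Ysol_zero, jf_half]
  · simp only [Ysol_zero, kf]; rw [sub_half, jf_half]
  · intro t
    rw [(hasDerivAt_Ysol t).deriv]
    unfold speed ell; ring
  · intro t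
    rw [(hZ t).deriv, hE]
    simp only [ell]; ring
  · intro t
    have h1 := (one_sub_mem (Ysol_mem t)).1.ne'
    have h2 := (ell_pos (one_sub_mem (Ysol_mem t))).ne'
    rw [(hP t).deriv, hE, phi]
    field_simp
  · intro t
    have h1 := (Ysol_mem t).1.ne'
    have h2 := (ell_pos (Ysol_mem t)).ne'
    rw [(hQ t).deriv]
    simp only [speed, phi, kf, sub_sub_cancel]
    field_simp
  · exact fun t => ((constraints_iff (Ysol_mem t)).2 ⟨rfl, rfl⟩).1
  · exact fun t => ((constraints_iff (Ysol_mem t)).2 ⟨rfl, rfl⟩).2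

/-! ### Uniqueness -/

/-- A homogeneous linear planar system with continuous coefficients and zero initial data has only
the zero solution, by Grönwall's argument for the energy `u² + v²`. -/
lemma eq_zero_of_linear {u v a b : ℝ → ℝ} {c : ℝ} (ha : Continuous a) (hb : Continuous b)
    (hu : ∀ t, HasDerivAt u (c * v t) t) (hv : ∀ t, HasDerivAt v (a t * v t + b t * u t) t)
    (hu0 : u 0 = 0) (hv0 : v 0 = 0) (t : ℝ) : u t = 0 ∧ v t = 0 := by
  set C : ℝ → ℝ := fun t => |c| + 2 * |a t| + |b t| with hC
  have hCc : Continuous C := by fun_prop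
  set G : ℝ → ℝ := fun t => ∫ s in (0 : ℝ)..t, C s
  have hG (t : ℝ) : HasDerivAt G (C t) t := hCc.integral_hasStrictDerivAt 0 t |>.hasDerivAt
  set E : ℝ → ℝ := fun t => u t ^ 2 + v t ^ 2 with hE
  set E' : ℝ → ℝ := fun t => 2 * u t * (c * v t) + 2 * v t * (a t * v t + b t * u t) with hE'
  have hEd (t : ℝ) : HasDerivAt E (E' t) t := by
    have := ((hu t).pow 2).add ((hv t).pow 2)
    refine HasDerivAt.congr_deriv this (Eq.symm ?_)
    simp [hE']
  have hE0 : E 0 = 0 := by simp [hE, hu0, hv0]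
  have hb (t : ℝ) : |E' t| ≤ C t * E t := by
    have h1 : |2 * (u t * v t)| ≤ E t := by
      rw [abs_le]; constructor <;> nlinarith [sq_nonneg (u t + v t), sq_nonneg (u t - v t)]
    have e : E' t = c * (2 * (u t * v t)) + 2 * a t * v t ^ 2 + b t * (2 * (u t * v t)) := by
      simp only [hE']; ring
    have h2 : |2 * a t * v t ^ 2| ≤ 2 * |a t| * E t := by
      rw [abs_mul, abs_mul, abs_two, abs_of_nonneg (sq_nonneg (v t))]
      gcongr
      simp only [hE]; nlinarith [sq_nonneg (u t)]
    calc |E' t| ≤ |c| * |2 * (u t * v t)| + |2 * a t * v t ^ 2| + |b t| * |2 * (u t * v t)| := by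
          rw [e, ← abs_mul, ← abs_mul]
          exact abs_add_three _ _ _
      _ ≤ |c| * E t + 2 * |a t| * E t + |b t| * E t := by gcongr
      _ = C t * E t := by simp only [hC]; ring
  have hEt : E t ≤ 0 := by
    rcases le_total 0 t with h | h
    · have hd (s : ℝ) := (hEd s).mul (hG s).neg.exp
      have hm : Antitone (E * fun s => Real.exp (-G s)) := by
        apply antitone_of_deriv_nonpos (fun s => (hd s).differentiableAt)
        intro s
        rw [(hd s).deriv]
        have := (abs_le.1 (hb s)).2
        have := Real.exp_pos (-G s)
        simp only [Pi.neg_apply]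
        nlinarith
      have := hm h
      simp only [Pi.mul_apply, hE0, zero_mul] at this
      exact nonpos_of_mul_nonpos_left this (Real.exp_pos _)
    · have hd (s : ℝ) := (hEd s).mul (hG s).exp
      have hm : Monotone (E * fun s => Real.exp (G s)) := by
        apply monotone_of_deriv_nonneg (fun s => (hd s).differentiableAt)
        intro s
        rw [(hd s).deriv]
        have := (abs_le.1 (hb s)).1
        have := Real.exp_pos (G s)
        nlinarith
      have := hm h
      simp only [Pi.mul_apply, hE0, zero_mul] at this
      exact nonpos_of_mul_nonpos_left this (Real.exp_pos _)
  simp only [hE] at hEt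
  constructor <;> nlinarith [sq_nonneg (u t), sq_nonneg (v t)]

/-- Every solution satisfies `Y + Z = 1` and `P y Y = Q z Z`. -/
lemma IVPSol.invariants {Y Z P Q J K : ℝ → ℝ} (h : IVPSol Y Z P Q J K) (t : ℝ) :
    Y t + Z t - 1 = 0 ∧ P t * (ell (Y t) * Y t) - Q t * (ell (Z t) * Z t) = 0 := by
  obtain ⟨dY, dZ, dP, dQ, hY, hZ, Y0, Z0, P0, Q0, -, -, eY, eZ, eP, eQ, c1, -⟩ := h
  have cY := dY.continuous
  have cZ := dZ.continuous
  have cP := dP.continuous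
  have cQ := dQ.continuous
  have clY : Continuous fun t => ell (Y t) := (cY.log fun t => (hY t).1.ne').neg
  have clZ : Continuous fun t => ell (Z t) := (cZ.log fun t => (hZ t).1.ne').neg
  set u : ℝ → ℝ := fun t => Y t + Z t - 1 with hu
  set B : ℝ → ℝ := fun t => Q t * (ell (Z t) * Z t) with hB
  set v : ℝ → ℝ := fun t => P t * (ell (Y t) * Y t) - B t with hv
  have cB : Continuous B := by fun_prop
  have cv : Continuous v := by fun_prop
  have hne (t : ℝ) : Y t * Z t ≠ 0 := (mul_pos (hY t).1 (hZ t).1).ne'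
  refine eq_zero_of_linear (u := u) (v := v) (c := -Real.log 2)
    (a := fun t => Real.log 2 * (P t - Q t + (B t - 2 * B t * Z t - v t * Z t) / (Y t * Z t)))
    (b := fun t => -Real.log 2 * (B t ^ 2 / (Y t * Z t))) ?_ ?_ ?_ ?_ ?_ ?_ t
  · exact continuous_const.mul ((cP.sub cQ).add
      (Continuous.div (by fun_prop) (by fun_prop) hne))
  · exact continuous_const.mul (Continuous.div (by fun_prop) (by fun_prop) hne)
  · intro t
    have := ((dY t).hasDerivAt.add (dZ t).hasDerivAt).sub_const 1
    rw [eY, eZ] at this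
    refine HasDerivAt.congr_deriv this (Eq.symm ?_)
    simp only [hv, hB, ell]; ring
  · intro t
    have hy := (dY t).hasDerivAt
    have hz := (dZ t).hasDerivAt
    have h := ((dP t).hasDerivAt.mul (((hasDerivAt_ell (hY t)).comp t hy).mul hy)).sub
      ((dQ t).hasDerivAt.mul (((hasDerivAt_ell (hZ t)).comp t hz).mul hz))
    have key : ell (Y t) * Y t * J t + ell (Z t) * Z t * K t = ell (Y t) * ell (Z t) := by
      have e := c1 t
      have l1 : Real.log (Y t) = -ell (Y t) := by simp [ell]
      have l2 : Real.log (Z t) = -ell (Z t) := by simp [ell]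
      have n1 := (ell_pos (hY t)).ne'
      have n2 := (ell_pos (hZ t)).ne'
      rw [l1, l2] at e
      field_simp at e
      linear_combination e
    refine HasDerivAt.congr_deriv h (Eq.symm ?_)
    rw [eY, eZ, eP, eQ]
    have l1 : Real.log (Y t) = -ell (Y t) := by simp [ell]
    have l2 : Real.log (Z t) = -ell (Z t) := by simp [ell]
    have n1 := (hY t).1.ne'
    have n2 := (hZ t).1.ne'
    simp only [hu, hv, hB, Function.comp, Pi.mul_apply]
    rw [l1, l2]
    field_simp
    linear_combination (-(P t * Q t * Y t)) * key
  · simp only [hu, Y0, Z0]; norm_num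
  · simp only [hv, hB, Y0, Z0, P0, Q0]; norm_num

lemma IVPSol.eq_sol {Y Z P Q J K : ℝ → ℝ} (h : IVPSol Y Z P Q J K) (t : ℝ) :
    Y t = Ysol t ∧ Z t = 1 - Ysol t ∧ P t = Real.exp (Phi (Ysol t)) ∧
      Q t = Real.exp (Psi (Ysol t)) ∧ J t = jf (Ysol t) ∧ K t = kf (Ysol t) := by
  have inv := h.invariants
  obtain ⟨dY, dZ, dP, dQ, hY, hZ, Y0, Z0, P0, Q0, -, -, eY, eZ, eP, eQ, c1, c2⟩ := h
  have hZY (t : ℝ) : Z t = 1 - Y t := by linarith [(inv t).1]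
  have hJK (t : ℝ) : J t = jf (Y t) ∧ K t = kf (Y t) := by
    rw [← constraints_iff (hY t), ← hZY t]
    exact ⟨c1 t, c2 t⟩
  have hQ (t : ℝ) : Q t * (ell (1 - Y t) * (1 - Y t)) = P t * (ell (Y t) * Y t) := by
    rw [← hZY]; linarith [(inv t).2]
  -- `P` and `exp (Phi Y)` solve the same scalar linear equation
  have hd (t : ℝ) : HasDerivAt (fun t => P t * Real.exp (-Phi (Y t))) 0 t := by
    have := (dP t).hasDerivAt.mul
      ((hasDerivAt_Phi (hY t)).comp t (dY t).hasDerivAt).neg.exp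
    refine HasDerivAt.congr_deriv this (Eq.symm ?_)
    rw [eP, eY, (hJK t).1]
    have e1 := hQ t
    have l1 : Real.log (Y t) = -ell (Y t) := by simp [ell]
    have n1 := (one_sub_mem (hY t)).1.ne'
    have n2 := (ell_pos (one_sub_mem (hY t))).ne'
    simp only [Function.comp, Pi.neg_apply, phi]
    rw [l1]
    field_simp
    linear_combination (1 - jf (Y t)) * P t * Real.log 2 * Real.exp (-Phi (Y t)) * e1
  have hP (t : ℝ) : P t = Real.exp (Phi (Y t)) := by
    have := is_const_of_deriv_eq_zero (fun t => (hd t).differentiableAt)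
      (fun t => (hd t).deriv) t 0
    simp only [Y0, P0, Phi_half, neg_zero, Real.exp_zero, mul_one] at this
    rw [Real.exp_neg] at this
    exact (mul_inv_eq_one₀ (Real.exp_ne_zero _)).1 this
  have hT (t : ℝ) : HasDerivAt (fun t => T (Y t) - t) 0 t := by
    have := ((hasDerivAt_T (hY t)).comp t (dY t).hasDerivAt).sub (hasDerivAt_id t)
    refine HasDerivAt.congr_deriv this (Eq.symm ?_)
    have e : deriv Y t = -speed (Y t) := by
      rw [eY, hP, speed, ell]; ring
    rw [e, neg_mul_neg, inv_mul_cancel₀ (speed_pos (hY t)).ne', sub_self]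
  have hYt : Y t = Ysol t := by
    apply eq_Ysol (hY t)
    have := is_const_of_deriv_eq_zero (fun t => (hT t).differentiableAt)
      (fun t => (hT t).deriv) t 0
    simp only [Y0, T_half] at this
    linarith
  have hs' := one_sub_mem (hY t)
  refine ⟨hYt, hYt ▸ hZY t, hYt ▸ hP t, ?_, hYt ▸ (hJK t).1, hYt ▸ (hJK t).2⟩
  rw [← hYt]
  apply mul_right_cancel₀ (mul_pos (ell_pos hs') hs'.1).ne'
  rw [hQ, exp_Psi (hY t), hP]

end

/-- The IVP admits a unique global-in-time solution. -/
theorem stmt_13 :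
    ∃! s : (ℝ → ℝ) × (ℝ → ℝ) × (ℝ → ℝ) × (ℝ → ℝ) × (ℝ → ℝ) × (ℝ → ℝ),
      IVPSol s.1 s.2.1 s.2.2.1 s.2.2.2.1 s.2.2.2.2.1 s.2.2.2.2.2 := by
  refine ⟨(_, _, _, _, _, _), exists_sol, ?_⟩
  rintro ⟨Y, Z, P, Q, J, K⟩ h
  have e := fun t => IVPSol.eq_sol h t
  simp only [Prod.mk.injEq]
  exact ⟨funext fun t => (e t).1, funext fun t => (e t).2.1, funext fun t => (e t).2.2.1,
    funext fun t => (e t).2.2.2.1, funext fun t => (e t).2.2.2.2.1,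
    funext fun t => (e t).2.2.2.2.2⟩
end

section
/- Suppose (Y, Z, P, Q, J, K) are functions from ℝ to ℝ with Y, Z, P, Q differentiable, Y(t), Z(t) ∈ (0,1) for all t, Y(0) = Z(0) = 1/2, P(0) = Q(0) = 1, J(0) = K(0) = ln 2, and satisfying for all t the equations Y' = ln(2)·P·Y·ln(Y), Z' = −ln(2)·Q·Z·ln(Z), P' = −ln(2)·(1−J)·P·Q, Q' = ln(2)·(1−K)·P·Q, −1 = (Y/ln Z)·J + (Z/ln Y)·K, and 0 = ((Z·ln Z + Y)/(Z·(ln Z)²))·J − ((Y·ln Y + Z)/(Y·(ln Y)²))·K. Then Y(t) + Z(t) = 1 for all t ∈ ℝ. -/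
open Filter Topology

/-- The quantity whose nonvanishing makes the two constraints uniquely solvable for `(J, K)` is
negative on the line `y + z = 1`. -/
lemma det_neg {y z : ℝ} (hy : y ∈ Set.Ioo (0 : ℝ) 1) (hz : z ∈ Set.Ioo (0 : ℝ) 1)
    (hyz : y + z = 1) :
    Real.log y * Real.log z * (y + z) + Real.log z * z + Real.log y * y < 0 := by
  have key : ∀ x ∈ Set.Ioo (0 : ℝ) 1, -Real.log x * x < 1 - x := by
    intro x hx
    have h := Real.log_lt_sub_one_of_pos (inv_pos.2 hx.1) (by
      simpa using hx.2.ne)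
    rw [Real.log_inv] at h
    calc -Real.log x * x < (x⁻¹ - 1) * x := mul_lt_mul_of_pos_right h hx.1
      _ = 1 - x := by rw [sub_mul, inv_mul_cancel₀ hx.1.ne', one_mul]
  have ha := Real.log_neg hy.1 hy.2
  have hb := Real.log_neg hz.1 hz.2
  have h1 := key y hy
  have h2 := key z hz
  have e1 : 1 - y = z := by linarith
  have e2 : 1 - z = y := by linarith
  rw [e1] at h1
  rw [e2] at h2
  nlinarith [mul_lt_mul_of_pos_right h1 (neg_pos.2 hb), mul_lt_mul_of_pos_right h2 (neg_pos.2 ha)]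

/-- Cramer's rule for the two algebraic constraints, with `a = log y`, `b = log z`. -/
lemma solve_constraints {y z a b j k : ℝ} (hy : y ≠ 0) (hz : z ≠ 0) (ha : a ≠ 0) (hb : b ≠ 0)
    (hD : a * b * (y + z) + b * z + a * y ≠ 0)
    (h1 : -1 = y / b * j + z / a * k)
    (h2 : 0 = (z * b + y) / (z * b ^ 2) * j - (y * a + z) / (y * a ^ 2) * k) :
    j = -(b ^ 2 * (y * a + z)) / (y * (a * b * (y + z) + b * z + a * y)) ∧
    k = -(a ^ 2 * (z * b + y)) / (z * (a * b * (y + z) + b * z + a * y)) := by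
  have e1 : y * a * j + z * b * k = -(a * b) := by
    field_simp at h1
    linarith
  have e2 : (z * b + y) * (y * a ^ 2) * j = (y * a + z) * (z * b ^ 2) * k := by
    field_simp at h2
    linarith
  constructor
  · rw [eq_div_iff (mul_ne_zero hy hD)]
    apply mul_left_cancel₀ ha
    linear_combination b * (y * a + z) * e1 + e2
  · rw [eq_div_iff (mul_ne_zero hz hD)]
    apply mul_left_cancel₀ hb
    linear_combination a * (z * b + y) * e1 - e2

/-- A linear system whose coefficients are continuous at `t₀` has only the zero solution with zero
value at `t₀`, near `t₀`. -/
lemma linear_local_unique {u w α β : ℝ → ℝ} {c t₀ : ℝ}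
    (hu : ∀ t, HasDerivAt u (c * w t) t)
    (hw : ∀ t, HasDerivAt w (α t * w t + β t * u t) t)
    (hα : ContinuousAt α t₀) (hβ : ContinuousAt β t₀) (hu0 : u t₀ = 0) (hw0 : w t₀ = 0) :
    ∀ᶠ t in 𝓝 t₀, u t = 0 ∧ w t = 0 := by
  have hA : ∀ᶠ t in 𝓝 t₀, |α t| < |α t₀| + 1 :=
    hα.abs.eventually_lt continuousAt_const (by simp)
  have hB : ∀ᶠ t in 𝓝 t₀, |β t| < |β t₀| + 1 :=
    hβ.abs.eventually_lt continuousAt_const (by simp)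
  have hM : 0 ≤ |c| + (|α t₀| + 1) + (|β t₀| + 1) := by positivity
  have h := ODE_solution_unique_of_eventually
    (v := fun t (x : ℝ × ℝ) => (c * x.2, α t * x.2 + β t * x.1))
    (s := fun _ => Set.univ) (K := NNReal.mk (|c| + (|α t₀| + 1) + (|β t₀| + 1)) hM)
    (f := fun t => (u t, w t)) (g := fun _ => (0, 0)) (t₀ := t₀) ?_ ?_ ?_ ?_
  · filter_upwards [h] with t ht
    simpa using ht
  · filter_upwards [hA, hB] with t hAt hBt
    refine LipschitzOnWith.of_dist_le_mul fun x _ y _ => ?_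
    have d1 : |x.1 - y.1| ≤ dist x y := by
      rw [Prod.dist_eq, ← Real.dist_eq]; exact le_max_left _ _
    have d2 : |x.2 - y.2| ≤ dist x y := by
      rw [Prod.dist_eq, ← Real.dist_eq]; exact le_max_right _ _
    have hd : 0 ≤ dist x y := dist_nonneg
    have m0 : |c| * |x.2 - y.2| ≤ |c| * dist x y := by gcongr
    have m1 : |α t| * |x.2 - y.2| ≤ (|α t₀| + 1) * dist x y := by gcongr
    have m2 : |β t| * |x.1 - y.1| ≤ (|β t₀| + 1) * dist x y := by gcongr
    have n0 : 0 ≤ |c| * dist x y := by positivity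
    have n1 : 0 ≤ (|α t₀| + 1) * dist x y := by positivity
    have n2 : 0 ≤ (|β t₀| + 1) * dist x y := by positivity
    rw [Prod.dist_eq, NNReal.coe_mk, add_mul, add_mul]
    refine max_le ?_ ?_
    · rw [Real.dist_eq, ← mul_sub, abs_mul]
      linarith
    · have e : α t * x.2 + β t * x.1 - (α t * y.2 + β t * y.1)
          = α t * (x.2 - y.2) + β t * (x.1 - y.1) := by ring
      rw [Real.dist_eq, e]
      refine (abs_add_le _ _).trans ?_
      rw [abs_mul, abs_mul]
      linarith
  · exact Eventually.of_forall fun t => ⟨(hu t).prodMk (hw t), Set.mem_univ _⟩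
  · refine Eventually.of_forall fun t => ⟨?_, Set.mem_univ _⟩
    convert hasDerivAt_const t ((0 : ℝ), (0 : ℝ)) using 1
    simp
  · simp [hu0, hw0]

/-- The linear differential equation for the defect `w = P * Y * log Y - Q * Z * log Z`, with
`u = Y + Z - 1`; the first algebraic constraint is what produces the factor `u`. -/
lemma defect_hasDerivAt {Y Z P Q : ℝ → ℝ} {j k l t : ℝ}
    (hY0 : Y t ∈ Set.Ioo (0 : ℝ) 1) (hZ0 : Z t ∈ Set.Ioo (0 : ℝ) 1)
    (hY : HasDerivAt Y (l * P t * Y t * Real.log (Y t)) t)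
    (hZ : HasDerivAt Z (-l * Q t * Z t * Real.log (Z t)) t)
    (hP : HasDerivAt P (-l * (1 - j) * P t * Q t) t)
    (hQ : HasDerivAt Q (l * (1 - k) * P t * Q t) t)
    (h1 : -1 = Y t / Real.log (Z t) * j + Z t / Real.log (Y t) * k) :
    HasDerivAt (fun s => P s * Y s * Real.log (Y s) - Q s * Z s * Real.log (Z s))
      (l * (-(1 - j) * Q t + P t * Real.log (Y t) + P t
          + Q t * Z t * Real.log (Z t) * (k + Real.log (Y t)) / (Y t * Real.log (Y t)))
        * (P t * Y t * Real.log (Y t) - Q t * Z t * Real.log (Z t))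
        + l * (Q t * Z t * Real.log (Z t)) * Q t * Real.log (Z t) / Y t * (Y t + Z t - 1)) t := by
  have hy := hY0.1.ne'
  have hz := hZ0.1.ne'
  have ha := (Real.log_neg hY0.1 hY0.2).ne
  have hb := (Real.log_neg hZ0.1 hZ0.2).ne
  refine (((hP.fun_mul hY).fun_mul (hY.log hy)).fun_sub
    ((hQ.fun_mul hZ).fun_mul (hZ.log hz))).congr_deriv ?_
  generalize Real.log (Y t) = a at *
  generalize Real.log (Z t) = b at *
  generalize Y t = y at *
  generalize Z t = z at *
  generalize P t = p at *
  generalize Q t = q at *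
  have e1 : y * a * j + z * b * k = -(a * b) := by
    field_simp at h1
    linarith
  field_simp
  linear_combination l * q ^ 2 * z * b * e1

/-- Any solution of the IVP satisfies `Y(t) + Z(t) = 1` for all `t`. -/
theorem stmt_14 (Y Z P Q J K : ℝ → ℝ) (h : IVPSol Y Z P Q J K) :
    ∀ t : ℝ, Y t + Z t = 1 := by
  obtain ⟨dY, dZ, dP, dQ, hY, hZ, Y0, Z0, P0, Q0, -, -, eY, eZ, eP, eQ, c1, c2⟩ := h
  have DY := fun t => eY t ▸ (dY t).hasDerivAt
  have DZ := fun t => eZ t ▸ (dZ t).hasDerivAt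
  have DP := fun t => eP t ▸ (dP t).hasDerivAt
  have DQ := fun t => eQ t ▸ (dQ t).hasDerivAt
  have cY := dY.continuous
  have cZ := dZ.continuous
  have cP := dP.continuous
  have cQ := dQ.continuous
  have ca : Continuous fun t => Real.log (Y t) := cY.log fun t => (hY t).1.ne'
  have cb : Continuous fun t => Real.log (Z t) := cZ.log fun t => (hZ t).1.ne'
  have ha : ∀ t, Real.log (Y t) ≠ 0 := fun t => (Real.log_neg (hY t).1 (hY t).2).ne
  have hb : ∀ t, Real.log (Z t) ≠ 0 := fun t => (Real.log_neg (hZ t).1 (hZ t).2).ne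
  let u : ℝ → ℝ := fun t => Y t + Z t - 1
  let w : ℝ → ℝ := fun t => P t * Y t * Real.log (Y t) - Q t * Z t * Real.log (Z t)
  have hu : ∀ t, HasDerivAt u (Real.log 2 * w t) t := fun t => by
    refine (((DY t).fun_add (DZ t)).sub_const 1).congr_deriv ?_
    simp only [w]
    ring
  have hw := fun t => defect_hasDerivAt (hY t) (hZ t) (DY t) (DZ t) (DP t) (DQ t) (c1 t)
  have cu : Continuous u := (cY.add cZ).sub continuous_const
  have cw : Continuous w := ((cP.mul cY).mul ca).sub ((cQ.mul cZ).mul cb)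
  have hclopen : IsClopen {t | u t = 0 ∧ w t = 0} := by
    refine ⟨(isClosed_eq cu continuous_const).inter (isClosed_eq cw continuous_const), ?_⟩
    rw [isOpen_iff_mem_nhds]
    rintro t₀ ⟨hu0, hw0⟩
    let D : ℝ → ℝ := fun t => Real.log (Y t) * Real.log (Z t) * (Y t + Z t)
      + Real.log (Z t) * Z t + Real.log (Y t) * Y t
    have cD : Continuous D := by fun_prop
    have hD0 : D t₀ ≠ 0 := (det_neg (hY t₀) (hZ t₀) (by simp only [u] at hu0; linarith)).ne
    have hD : ∀ᶠ t in 𝓝 t₀, D t ≠ 0 := cD.continuousAt.eventually_ne hD0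
    have hJK := fun t (ht : D t ≠ 0) =>
      solve_constraints (hY t).1.ne' (hZ t).1.ne' (ha t) (hb t) ht (c1 t) (c2 t)
    have cJ : ContinuousAt J t₀ := by
      refine ContinuousAt.congr (f := fun t =>
        -(Real.log (Z t) ^ 2 * (Y t * Real.log (Y t) + Z t)) / (Y t * D t)) ?_
        (hD.mono fun t ht => (hJK t ht).1.symm)
      exact ContinuousAt.div (by fun_prop) (by fun_prop) (mul_ne_zero (hY t₀).1.ne' hD0)
    have cK : ContinuousAt K t₀ := by
      refine ContinuousAt.congr (f := fun t =>
        -(Real.log (Y t) ^ 2 * (Z t * Real.log (Z t) + Y t)) / (Z t * D t)) ?_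
        (hD.mono fun t ht => (hJK t ht).2.symm)
      exact ContinuousAt.div (by fun_prop) (by fun_prop) (mul_ne_zero (hZ t₀).1.ne' hD0)
    have hy₀ : Y t₀ ≠ 0 := (hY t₀).1.ne'
    have hz₀ : Z t₀ ≠ 0 := (hZ t₀).1.ne'
    refine linear_local_unique hu hw ?_ ?_ hu0 hw0
    · have : ContinuousAt (fun t => Q t * Z t * Real.log (Z t) * (K t + Real.log (Y t))
          / (Y t * Real.log (Y t))) t₀ :=
        ContinuousAt.div (by fun_prop (disch := assumption)) (by fun_prop (disch := assumption)) (mul_ne_zero (hY t₀).1.ne' (ha t₀))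
      fun_prop (disch := assumption)
    · exact ContinuousAt.div (by fun_prop (disch := assumption)) (by fun_prop (disch := assumption)) (hY t₀).1.ne'
  have h0 : (0 : ℝ) ∈ {t | u t = 0 ∧ w t = 0} := by
    simp only [u, w, Set.mem_ofPred_eq, Y0, Z0, P0, Q0]
    norm_num
  intro t
  have ht : t ∈ {t | u t = 0 ∧ w t = 0} := by
    rw [hclopen.eq_univ ⟨0, h0⟩]
    trivial
  have := ht.1
  simp only [u] at this
  linarith
end

section
/- Suppose (Y, Z, P, Q, J, K) are functions from ℝ to ℝ with Y, Z, P, Q differentiable, Y(t), Z(t) ∈ (0,1) for all t, Y(0) = Z(0) = 1/2, P(0) = Q(0) = 1, J(0) = K(0) = ln 2, and satisfying for all t the equations Y' = ln(2)·P·Y·ln(Y), Z' = −ln(2)·Q·Z·ln(Z), P' = −ln(2)·(1−J)·P·Q, Q' = ln(2)·(1−K)·P·Q, −1 = (Y/ln Z)·J + (Z/ln Y)·K, and 0 = ((Z·ln Z + Y)/(Z·(ln Z)²))·J − ((Y·ln Y + Z)/(Y·(ln Y)²))·K. Then for every t ≥ 0 the following bounds hold: 2^(−2^t) ≤ Y(t)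 ≤ 1 − 2^(−2^(−t)); 2^(−2^(−t)) ≤ Z(t) ≤ 1 − 2^(−2^t); e^(1−2^t) ≤ P(t) ≤ 1; and 1 ≤ Q(t) ≤ 2^t. -/
open Real Set Filter Topology

/-! ### Consequences of the algebraic constraints -/

/-- In the region `-Z log Z < Y`, `-Y log Y < Z` the second constraint forces `J` and `K` to have
the same sign, so both terms of the first constraint have the sign of `-1`. -/
lemma bounds_of_constraints {Y Z J K : ℝ} (hY : 0 < Y) (hY1 : Y < 1) (hZ : 0 < Z) (hZ1 : Z < 1)
    (h1 : -1 = Y / log Z * J + Z / log Y * K)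
    (h2 : 0 = (Z * log Z + Y) / (Z * (log Z) ^ 2) * J
          - (Y * log Y + Z) / (Y * (log Y) ^ 2) * K)
    (hA : 0 < Z * log Z + Y) (hB : 0 < Y * log Y + Z) :
    0 < J ∧ 0 < K ∧ J ≤ -log Z / Y ∧ K ≤ -log Y / Z := by
  have ly : log Y < 0 := log_neg hY hY1
  have lz : log Z < 0 := log_neg hZ hZ1
  have ha : 0 < (Z * log Z + Y) / (Z * (log Z) ^ 2) :=
    div_pos hA (mul_pos hZ (sq_pos_of_neg lz))
  have hb : 0 < (Y * log Y + Z) / (Y * (log Y) ^ 2) :=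
    div_pos hB (mul_pos hY (sq_pos_of_neg ly))
  set a := (Z * log Z + Y) / (Z * (log Z) ^ 2)
  set b := (Y * log Y + Z) / (Y * (log Y) ^ 2)
  have c1 : Y / log Z < 0 := div_neg_of_pos_of_neg hY lz
  have c2 : Z / log Y < 0 := div_neg_of_pos_of_neg hZ ly
  have hab : a * J = b * K := by linarith
  have hJ : 0 < J := by
    by_contra hJ
    have hK : K ≤ 0 := by
      by_contra hK
      nlinarith [mul_pos hb (not_le.1 hK), mul_nonneg ha.le (neg_nonneg.2 (not_lt.1 hJ))]
    nlinarith [mul_nonneg_of_nonpos_of_nonpos c1.le (not_lt.1 hJ),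
      mul_nonneg_of_nonpos_of_nonpos c2.le hK]
  have hK : 0 < K := pos_of_mul_pos_right (hab ▸ mul_pos ha hJ) hb.le
  have p1 := mul_neg_of_neg_of_pos c1 hJ
  have p2 := mul_neg_of_neg_of_pos c2 hK
  have nz := lz.ne
  have ny := ly.ne
  refine ⟨hJ, hK, ?_, ?_⟩
  · rw [le_div_iff₀ hY]
    have : Y / log Z * J * log Z = J * Y := by field_simp
    nlinarith
  · rw [le_div_iff₀ hZ]
    have : Z / log Y * K * log Y = K * Z := by field_simp
    nlinarith

lemma mul_log_add_pos {Y Z : ℝ} (hZ : 0 < Z) (hZ1 : Z < 1) (hS : Y + Z = 1) :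
    0 < Z * log Z + Y := by
  have h : log Z⁻¹ < Z⁻¹ - 1 := log_lt_sub_one_of_pos (by positivity) (by simpa using hZ1.ne)
  rw [log_inv] at h
  have h2 : Z * Z⁻¹ = 1 := mul_inv_cancel₀ hZ.ne'
  nlinarith

/-- This is `v ≤ sinh v` at `v = -(log Z) / 2`. -/
lemma mul_log_sq_le {Z : ℝ} (hZ : 0 < Z) (hZ1 : Z < 1) : Z * (log Z) ^ 2 ≤ (1 - Z) ^ 2 := by
  set z := -log Z with hz
  have hz0 : 0 < z := by have := log_neg hZ hZ1; linarith
  have h := Real.self_le_sinh_iff.2 (show 0 ≤ z / 2 by positivity)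
  rw [sinh_eq] at h
  have e1 : exp (-(z / 2)) ^ 2 = Z := by
    rw [← exp_nat_mul]; push_cast
    rw [show (2 : ℝ) * -(z / 2) = log Z by rw [hz]; ring, exp_log hZ]
  have e2 : exp (z / 2) * exp (-(z / 2)) = 1 := by rw [← exp_add]; simp
  set u := exp (-(z / 2))
  have hu : 0 < u := exp_pos _
  have h3 : u * z ≤ 1 - Z := by nlinarith
  have : log Z = -z := by simp [hz]
  rw [this, ← e1]
  rw [← e1] at h3
  have h4 : 0 ≤ u * z := by positivity
  nlinarith

/-- On the line `Y + Z = 1` the constraints force `J ≤ 1`; the constraints being symmetric, so is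
`K ≤ 1`. -/
lemma le_one_of_constraints {Y Z J K : ℝ} (hY : 0 < Y) (hY1 : Y < 1) (hZ : 0 < Z) (hZ1 : Z < 1)
    (hS : Y + Z = 1)
    (h1 : -1 = Y / log Z * J + Z / log Y * K)
    (h2 : 0 = (Z * log Z + Y) / (Z * (log Z) ^ 2) * J
          - (Y * log Y + Z) / (Y * (log Y) ^ 2) * K) : J ≤ 1 := by
  have hA := mul_log_add_pos hZ hZ1 hS
  have hB := mul_log_add_pos (Y := Z) hY hY1 (by linarith)
  obtain ⟨hJ, hK, -, -⟩ := bounds_of_constraints hY hY1 hZ hZ1 h1 h2 hA hB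
  have hsq := mul_log_sq_le hZ hZ1
  have ly : log Y < 0 := log_neg hY hY1
  have lz : log Z < 0 := log_neg hZ hZ1
  have hzY : Y ≤ -log Z := by
    have := log_le_sub_one_of_pos hZ
    linarith
  have hyl : 2 * Z ≤ -log Y * (1 + Y) := by
    have h := Real.le_log_one_add_of_nonneg (x := Z / Y) (by positivity)
    have e : 1 + Z / Y = Y⁻¹ := by field_simp; linarith
    rw [e, log_inv] at h
    have e3 : 2 * (Z / Y) / (Z / Y + 2) = 2 * Z / (1 + Y) := by
      rw [div_eq_div_iff (by positivity) (by positivity)]; field_simp; linarith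
    rw [e3, div_le_iff₀ (by positivity)] at h
    exact h
  obtain ⟨z, hz⟩ : ∃ z, log Z = -z := ⟨-log Z, by simp⟩
  obtain ⟨y, hy⟩ : ∃ y, log Y = -y := ⟨-log Y, by simp⟩
  rw [hz] at h1 h2 hA hsq lz hzY
  rw [hy] at h1 h2 hB hyl ly
  have hy0 : 0 < y := by linarith
  have hz0 : 0 < z := by linarith
  have E1 : Y * y * J + Z * z * K = y * z := by
    field_simp at h1; linarith
  have E2 : (Y - Z * z) * Y * y ^ 2 * J = (Z - Y * y) * Z * z ^ 2 * K := by
    field_simp at h2; linarith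
  -- eliminate `K` between the two constraints
  have E3 : (Z - Y * y) * z * (z - Y * J) = (Y - Z * z) * Y * y * J := by
    have : y * ((Z - Y * y) * z * (z - Y * J)) = y * ((Y - Z * z) * Y * y * J) := by
      linear_combination -E2 - (Z - Y * y) * z * E1
    exact mul_left_cancel₀ hy0.ne' this
  have hD : 0 < (Z - Y * y) * z * Y + (Y - Z * z) * Y * y := by
    have : 0 < Z - Y * y := by linarith
    have : 0 < Y - Z * z := by linarith
    positivity
  have hB2 : 2 * (Z - Y * y) ≤ y * Z := by nlinarith
  have key : (Z - Y * y) * z * (z - Y) ≤ (Y - Z * z) * Y * y := by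
    -- `Z z² ≤ Y²` and `Z z ≤ Y`
    have q : Z * z * (z - Y) ≤ 2 * (Y - Z * z) * Y := by
      have e : 1 - Z = Y := by linarith
      rw [e] at hsq
      nlinarith
    have q1 := mul_le_mul_of_nonneg_right hB2 (mul_nonneg hz0.le (sub_nonneg.2 hzY))
    have q2 := mul_le_mul_of_nonneg_left q hy0.le
    nlinarith
  have : ((Z - Y * y) * z * Y + (Y - Z * z) * Y * y) * J
      ≤ ((Z - Y * y) * z * Y + (Y - Z * z) * Y * y) * 1 := by
    nlinarith
  exact le_of_mul_le_mul_left this hD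

/-! ### Invariance of the line `Y + Z = 1` and signs of `P`, `Q` -/

section Invariant

variable {Y Z P Q J K : ℝ → ℝ}

/-- The quantity `w = P Y y - Q Z z`, where `y = -log Y` and `z = -log Z`; it is proportional
to the derivative of `Y + Z`. -/
noncomputable def wFun (Y Z P Q : ℝ → ℝ) (t : ℝ) : ℝ :=
  P t * Y t * (-log (Y t)) - Q t * Z t * (-log (Z t))

lemma IVPSol.hasDerivAt_Y (h : IVPSol Y Z P Q J K) (t : ℝ) :
    HasDerivAt Y (log 2 * P t * Y t * log (Y t)) t := by
  obtain ⟨dY, dZ, dP, dQ, hY, hZ, Y0, Z0, P0, Q0, J0, K0, eY, eZ, eP, eQ, c1, c2⟩ := h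
  exact eY t ▸ (dY t).hasDerivAt

lemma IVPSol.hasDerivAt_Z (h : IVPSol Y Z P Q J K) (t : ℝ) :
    HasDerivAt Z (-(log 2) * Q t * Z t * log (Z t)) t := by
  obtain ⟨dY, dZ, dP, dQ, hY, hZ, Y0, Z0, P0, Q0, J0, K0, eY, eZ, eP, eQ, c1, c2⟩ := h
  exact eZ t ▸ (dZ t).hasDerivAt

lemma IVPSol.hasDerivAt_P (h : IVPSol Y Z P Q J K) (t : ℝ) :
    HasDerivAt P (-(log 2) * (1 - J t) * P t * Q t) t := by
  obtain ⟨dY, dZ, dP, dQ, hY, hZ, Y0, Z0, P0, Q0, J0, K0, eY, eZ, eP, eQ, c1, c2⟩ := h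
  exact eP t ▸ (dP t).hasDerivAt

lemma IVPSol.hasDerivAt_Q (h : IVPSol Y Z P Q J K) (t : ℝ) :
    HasDerivAt Q (log 2 * (1 - K t) * P t * Q t) t := by
  obtain ⟨dY, dZ, dP, dQ, hY, hZ, Y0, Z0, P0, Q0, J0, K0, eY, eZ, eP, eQ, c1, c2⟩ := h
  exact eQ t ▸ (dQ t).hasDerivAt

lemma IVPSol.mem_Y (h : IVPSol Y Z P Q J K) (t : ℝ) : 0 < Y t ∧ Y t < 1 := h.2.2.2.2.1 t

lemma IVPSol.mem_Z (h : IVPSol Y Z P Q J K) (t : ℝ) : 0 < Z t ∧ Z t < 1 := h.2.2.2.2.2.1 t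

lemma IVPSol.constraint₁ (h : IVPSol Y Z P Q J K) (t : ℝ) :
    -1 = Y t / log (Z t) * J t + Z t / log (Y t) * K t := by
  obtain ⟨dY, dZ, dP, dQ, hY, hZ, Y0, Z0, P0, Q0, J0, K0, eY, eZ, eP, eQ, c1, c2⟩ := h
  exact c1 t

lemma IVPSol.constraint₂ (h : IVPSol Y Z P Q J K) (t : ℝ) :
    0 = (Z t * log (Z t) + Y t) / (Z t * (log (Z t)) ^ 2) * J t
          - (Y t * log (Y t) + Z t) / (Y t * (log (Y t)) ^ 2) * K t := by
  obtain ⟨dY, dZ, dP, dQ, hY, hZ, Y0, Z0, P0, Q0, J0, K0, eY, eZ, eP, eQ, c1, c2⟩ := h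
  exact c2 t

lemma IVPSol.hasDerivAt_logY (h : IVPSol Y Z P Q J K) (t : ℝ) :
    HasDerivAt (fun s => -log (Y s)) (log 2 * P t * -log (Y t)) t := by
  have hY := (h.mem_Y t).1
  have := ((h.hasDerivAt_Y t).log hY.ne').neg
  refine this.congr_deriv ?_
  field_simp

lemma IVPSol.hasDerivAt_logZ (h : IVPSol Y Z P Q J K) (t : ℝ) :
    HasDerivAt (fun s => -log (Z s)) (-(log 2 * Q t * -log (Z t))) t := by
  have hZ := (h.mem_Z t).1
  have := ((h.hasDerivAt_Z t).log hZ.ne').neg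
  refine this.congr_deriv ?_
  field_simp

lemma IVPSol.hasDerivAt_S (h : IVPSol Y Z P Q J K) (t : ℝ) :
    HasDerivAt (fun s => Y s + Z s - 1) (-(log 2) * wFun Y Z P Q t) t := by
  have := ((h.hasDerivAt_Y t).add (h.hasDerivAt_Z t)).sub_const 1
  refine this.congr_deriv ?_
  unfold wFun
  ring

/-- The derivative of `w` is a linear combination of `Y + Z - 1` and `w`; this is where the
first constraint enters. -/
lemma IVPSol.hasDerivAt_w (h : IVPSol Y Z P Q J K) (t : ℝ) :
    HasDerivAt (wFun Y Z P Q)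
      (log 2 * (-((Q t * Z t * (-log (Z t))) ^ 2 / (Y t * Z t)) * (Y t + Z t - 1)
        + (Q t * Z t * (-log (Z t)) / Y t * (K t / (-log (Y t)) - 1)
            + (J t - 1) * Q t + P t * log (Y t) + P t) * wFun Y Z P Q t)) t := by
  obtain ⟨hY, hY1⟩ := h.mem_Y t
  obtain ⟨hZ, hZ1⟩ := h.mem_Z t
  have ly : log (Y t) ≠ 0 := (log_neg hY hY1).ne
  have lz : log (Z t) ≠ 0 := (log_neg hZ hZ1).ne
  have hd := (((h.hasDerivAt_P t).mul (h.hasDerivAt_Y t)).mul (h.hasDerivAt_logY t)).sub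
    (((h.hasDerivAt_Q t).mul (h.hasDerivAt_Z t)).mul (h.hasDerivAt_logZ t))
  have c := h.constraint₁ t
  have E : J t * (Y t * log (Y t)) + K t * (Z t * log (Z t)) + log (Y t) * log (Z t) = 0 := by
    field_simp at c
    linarith
  refine hd.congr_deriv ?_
  unfold wFun
  simp only [Pi.mul_apply]
  field_simp
  linear_combination (-(Q t ^ 2 * Z t * log (Z t))) * E

/-- Near a point with `Y + Z = 1` the linear system for `(Y + Z - 1, w)` has bounded
coefficients, so a zero of `(Y + Z - 1, w)` propagates to the right. -/
lemma IVPSol.eventually_zero (h : IVPSol Y Z P Q J K) {x : ℝ} (hS : Y x + Z x - 1 = 0)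
    (hw : wFun Y Z P Q x = 0) :
    ∀ᶠ t in 𝓝[>] x, Y t + Z t - 1 = 0 ∧ wFun Y Z P Q t = 0 := by
  have cY : Continuous Y := h.1.continuous
  have cZ : Continuous Z := h.2.1.continuous
  have cP : Continuous P := h.2.2.1.continuous
  have cQ : Continuous Q := h.2.2.2.1.continuous
  have nY : ∀ t, Y t ≠ 0 := fun t => (h.mem_Y t).1.ne'
  have nZ : ∀ t, Z t ≠ 0 := fun t => (h.mem_Z t).1.ne'
  have clY : Continuous fun t => log (Y t) := cY.log nY
  have clZ : Continuous fun t => log (Z t) := cZ.log nZ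
  -- continuous majorants of the two coefficients, free of `J` and `K`
  let F : ℝ → ℝ := fun t => (Q t * Z t * (-log (Z t))) ^ 2 / (Y t * Z t)
  let G : ℝ → ℝ := fun t => |Q t * Z t * (-log (Z t)) / Y t| * (1 / Z t + 1)
    + (-log (Z t) / Y t + 1) * |Q t| + |P t * log (Y t)| + |P t|
  have cF : Continuous F := by
    refine Continuous.div (by fun_prop) (by fun_prop) fun t => mul_ne_zero (nY t) (nZ t)
  have cG : Continuous G := by
    have a1 : Continuous fun t => Q t * Z t * (-log (Z t)) / Y t :=
      Continuous.div (by fun_prop) cY nY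
    have a2 : Continuous fun t => 1 / Z t := continuous_const.div cZ nZ
    have a3 : Continuous fun t => -log (Z t) / Y t := clZ.neg.div cY nY
    fun_prop
  have hA : ∀ᶠ t in 𝓝 x, 0 < Z t * log (Z t) + Y t :=
    (by fun_prop : Continuous fun t => Z t * log (Z t) + Y t).continuousAt.eventually_const_lt
      (mul_log_add_pos (h.mem_Z x).1 (h.mem_Z x).2 (by linarith))
  have hB : ∀ᶠ t in 𝓝 x, 0 < Y t * log (Y t) + Z t :=
    (by fun_prop : Continuous fun t => Y t * log (Y t) + Z t).continuousAt.eventually_const_lt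
      (mul_log_add_pos (h.mem_Y x).1 (h.mem_Y x).2 (by linarith))
  have hF : ∀ᶠ t in 𝓝 x, F t < F x + 1 :=
    cF.continuousAt.eventually_lt_const (lt_add_one _)
  have hG : ∀ᶠ t in 𝓝 x, G t < G x + 1 :=
    cG.continuousAt.eventually_lt_const (lt_add_one _)
  obtain ⟨ε, hε, hball⟩ := Metric.eventually_nhds_iff.1 (hA.and (hB.and (hF.and hG)))
  have L0 : 0 < log 2 := log_pos one_lt_two
  let f : ℝ → ℝ × ℝ := fun t => (Y t + Z t - 1, wFun Y Z P Q t)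
  have hf := fun t => (h.hasDerivAt_S t).prodMk (h.hasDerivAt_w t)
  have key : ∀ t ∈ Icc x (x + ε / 2), f t = 0 := by
    refine eq_zero_of_abs_deriv_le_mul_abs_self_of_eq_zero_right
      (K := log 2 * (1 + (F x + 1) + (G x + 1)))
      (fun t _ => (hf t).continuousAt.continuousWithinAt)
      (fun t _ => (hf t).hasDerivWithinAt) (by simp [f, hS, hw]) ?_
    intro t ht
    obtain ⟨hAt, hBt, hFt, hGt⟩ := hball (y := t) (by
      rw [Real.dist_eq, abs_of_nonneg (by linarith [ht.1])]; linarith [ht.2])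
    obtain ⟨hY, hY1⟩ := h.mem_Y t
    obtain ⟨hZ, hZ1⟩ := h.mem_Z t
    obtain ⟨hJ, hK, hJ', hK'⟩ := bounds_of_constraints hY hY1 hZ hZ1 (h.constraint₁ t)
      (h.constraint₂ t) hAt hBt
    have ly := log_neg hY hY1
    have hF0 : 0 ≤ F t := by positivity
    have hcoef : |Q t * Z t * (-log (Z t)) / Y t * (K t / (-log (Y t)) - 1)
            + (J t - 1) * Q t + P t * log (Y t) + P t| ≤ G t := by
      have k0 : 0 < K t / (-log (Y t)) := div_pos hK (by linarith)
      have k1 : K t / (-log (Y t)) ≤ 1 / Z t := by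
        rw [div_le_div_iff₀ (by linarith) hZ]
        rw [le_div_iff₀ hZ] at hK'
        linarith
      have b1 : |K t / (-log (Y t)) - 1| ≤ 1 / Z t + 1 := abs_le.2 ⟨by linarith, by linarith⟩
      have b2 : |J t - 1| ≤ -log (Z t) / Y t + 1 := abs_le.2 ⟨by linarith, by linarith⟩
      refine (abs_add_le _ _).trans (add_le_add ((abs_add_le _ _).trans (add_le_add
        ((abs_add_le _ _).trans (add_le_add ?_ ?_)) le_rfl)) le_rfl)
      · rw [abs_mul]; gcongr
      · rw [abs_mul]; gcongr
    have hG0 : 0 ≤ G t := (abs_nonneg _).trans hcoef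
    have n1 : |Y t + Z t - 1| ≤ ‖f t‖ := norm_fst_le (f t)
    have n2 : |wFun Y Z P Q t| ≤ ‖f t‖ := norm_snd_le (f t)
    have n0 : 0 ≤ ‖f t‖ := norm_nonneg _
    rw [Prod.norm_mk]
    refine max_le ?_ ?_
    · rw [Real.norm_eq_abs, abs_mul, abs_neg, abs_of_pos L0, mul_assoc (log 2) (1 + _ + _)]
      refine mul_le_mul_of_nonneg_left ?_ L0.le
      nlinarith
    · rw [Real.norm_eq_abs, abs_mul, abs_of_pos L0, mul_assoc (log 2) (1 + _ + _)]
      refine mul_le_mul_of_nonneg_left ?_ L0.le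
      refine (abs_add_le _ _).trans ?_
      rw [abs_mul, abs_mul, abs_neg, abs_of_nonneg hF0]
      have m1 : F t * |Y t + Z t - 1| ≤ (F x + 1) * ‖f t‖ :=
        mul_le_mul hFt.le n1 (abs_nonneg _) (by linarith)
      have m2 := mul_le_mul (hcoef.trans hGt.le) n2 (abs_nonneg _) (by linarith)
      linarith
  filter_upwards [Icc_mem_nhdsGT (show x < x + ε / 2 by linarith)] with t ht
  exact Prod.ext_iff.1 (key t ht)

lemma IVPSol.invariant (h : IVPSol Y Z P Q J K) {t : ℝ} (ht : 0 ≤ t) :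
    Y t + Z t = 1 ∧ wFun Y Z P Q t = 0 := by
  have hc : IsClosed {t | Y t + Z t - 1 = 0 ∧ wFun Y Z P Q t = 0} := by
    have c1 : Continuous fun t => Y t + Z t - 1 :=
      continuous_iff_continuousAt.2 fun t => (h.hasDerivAt_S t).continuousAt
    have c2 : Continuous (wFun Y Z P Q) :=
      continuous_iff_continuousAt.2 fun t => (h.hasDerivAt_w t).continuousAt
    exact (isClosed_eq c1 continuous_const).inter (isClosed_eq c2 continuous_const)
  have := IsClosed.Icc_subset_of_forall_mem_nhdsWithin (a := 0) (b := t)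
    (hc.inter isClosed_Icc) (by
      obtain ⟨dY, dZ, dP, dQ, hY, hZ, Y0, Z0, P0, Q0, -⟩ := h
      constructor
      · rw [Y0, Z0]; norm_num
      · simp [wFun, Y0, Z0, P0, Q0])
    (fun x hx => h.eventually_zero hx.1.1 hx.1.2)
  obtain ⟨h1, h2⟩ := this (right_mem_Icc.2 ht)
  exact ⟨by linarith, h2⟩

lemma IVPSol.bounds_JK (h : IVPSol Y Z P Q J K) {t : ℝ} (ht : 0 ≤ t) :
    0 < J t ∧ J t ≤ 1 ∧ 0 < K t ∧ K t ≤ 1 := by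
  have hS := (h.invariant ht).1
  have hS' : Z t + Y t = 1 := by linarith
  obtain ⟨hY, hY1⟩ := h.mem_Y t
  obtain ⟨hZ, hZ1⟩ := h.mem_Z t
  have c1 := h.constraint₁ t
  have c2 := h.constraint₂ t
  obtain ⟨hJ, hK, -, -⟩ := bounds_of_constraints hY hY1 hZ hZ1 c1 c2
    (mul_log_add_pos hZ hZ1 hS) (mul_log_add_pos hY hY1 hS')
  exact ⟨hJ, le_one_of_constraints hY hY1 hZ hZ1 hS c1 c2, hK,
    le_one_of_constraints (K := J t) hZ hZ1 hY hY1 hS' (by linarith) (by linarith)⟩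

/-- A zero of `P` would propagate backwards to `0`, by uniqueness for the equation of `P`. -/
lemma IVPSol.P_pos (h : IVPSol Y Z P Q J K) {t : ℝ} (ht : 0 ≤ t) : 0 < P t := by
  have L0 : 0 < log 2 := log_pos one_lt_two
  have cP : Continuous P := h.2.2.1.continuous
  have cQ : Continuous Q := h.2.2.2.1.continuous
  have P0 : P 0 = 1 := by
    obtain ⟨dY, dZ, dP, dQ, hY, hZ, Y0, Z0, P0, -⟩ := h
    exact P0
  have hne : ∀ s, 0 ≤ s → P s ≠ 0 := by
    intro s hs hPs
    obtain ⟨C, hC⟩ := (isCompact_Icc (a := 0) (b := s)).exists_bound_of_continuousOn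
      cQ.continuousOn
    have hd : ∀ r, HasDerivAt (fun r => P (s - r))
        (-(-(log 2) * (1 - J (s - r)) * P (s - r) * Q (s - r))) r :=
      fun r => (h.hasDerivAt_P (s - r)).comp_const_sub s r
    have key := eq_zero_of_abs_deriv_le_mul_abs_self_of_eq_zero_right (K := log 2 * C)
      (a := 0) (b := s) (fun r _ => (hd r).continuousAt.continuousWithinAt)
      (fun r _ => (hd r).hasDerivWithinAt) (by simpa using hPs) (by
        intro r hr
        obtain ⟨j0, j1, -, -⟩ := h.bounds_JK (t := s - r) (by linarith [hr.2])
        have hQ := hC (s - r) ⟨by linarith [hr.2], by linarith [hr.1]⟩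
        rw [Real.norm_eq_abs] at hQ
        simp only [norm_neg, norm_mul, Real.norm_eq_abs, abs_of_pos L0]
        have hj : |1 - J (s - r)| ≤ 1 := abs_le.2 ⟨by linarith, by linarith⟩
        have hjq : |1 - J (s - r)| * |Q (s - r)| ≤ 1 * C :=
          mul_le_mul hj hQ (abs_nonneg _) zero_le_one
        have := mul_le_mul_of_nonneg_left hjq (mul_nonneg L0.le (abs_nonneg (P (s - r))))
        linarith) s (right_mem_Icc.2 hs)
    simp [P0] at key
  by_contra hneg
  obtain ⟨s, hs, hs0⟩ := intermediate_value_Icc' ht cP.continuousOn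
    (show (0 : ℝ) ∈ Icc (P t) (P 0) from ⟨not_lt.1 hneg, by rw [P0]; exact zero_le_one⟩)
  exact hne s hs.1 hs0

lemma IVPSol.Q_pos (h : IVPSol Y Z P Q J K) {t : ℝ} (ht : 0 ≤ t) : 0 < Q t := by
  obtain ⟨hY, hY1⟩ := h.mem_Y t
  obtain ⟨hZ, hZ1⟩ := h.mem_Z t
  have hw := (h.invariant ht).2
  have ly := log_neg hY hY1
  have lz := log_neg hZ hZ1
  have h1 : 0 < P t * Y t * (-log (Y t)) :=
    mul_pos (mul_pos (h.P_pos ht) hY) (by linarith)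
  have h2 : 0 < Q t * (Z t * (-log (Z t))) := by
    unfold wFun at hw
    linarith
  exact pos_of_mul_pos_left h2 (mul_nonneg hZ.le (by linarith))

end Invariant

/-! ### Integration of the differential inequalities -/

lemma apply_le_apply_zero_of_deriv_nonpos {f f' : ℝ → ℝ} (hf : ∀ t, HasDerivAt f (f' t) t)
    (h : ∀ t, 0 ≤ t → f' t ≤ 0) {t : ℝ} (ht : 0 ≤ t) : f t ≤ f 0 := by
  refine antitoneOn_of_deriv_nonpos (convex_Ici 0)
    (fun s _ => (hf s).continuousAt.continuousWithinAt)
    (fun s _ => (hf s).differentiableAt.differentiableWithinAt) (fun s hs => ?_)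
    (mem_Ici.2 le_rfl) (mem_Ici.2 ht) ht
  rw [(hf s).deriv]
  exact h s (interior_subset hs)

/-- Bounds maintained by any solution of the IVP for `t ≥ 0`. -/
theorem stmt_15 (Y Z P Q J K : ℝ → ℝ) (h : IVPSol Y Z P Q J K) :
    ∀ t : ℝ, 0 ≤ t →
      (2 : ℝ) ^ (-(2 : ℝ) ^ t) ≤ Y t ∧ Y t ≤ 1 - (2 : ℝ) ^ (-(2 : ℝ) ^ (-t)) ∧
      (2 : ℝ) ^ (-(2 : ℝ) ^ (-t)) ≤ Z t ∧ Z t ≤ 1 - (2 : ℝ) ^ (-(2 : ℝ) ^ t) ∧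
      Real.exp (1 - (2 : ℝ) ^ t) ≤ P t ∧ P t ≤ 1 ∧
      1 ≤ Q t ∧ Q t ≤ (2 : ℝ) ^ t := by
  have L0 : 0 < log 2 := log_pos one_lt_two
  have ⟨_, _, _, _, _, _, Y0, Z0, P0, Q0, _⟩ := h
  have e2 : ∀ t : ℝ, (2 : ℝ) ^ t = exp (log 2 * t) := fun t => rpow_def_of_pos two_pos t
  -- exponential integrating factors
  have dE : ∀ c t : ℝ, HasDerivAt (fun t => exp (c * t)) (c * exp (c * t)) t := by
    intro c t
    have := ((hasDerivAt_id t).const_mul c).exp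
    refine this.congr_deriv ?_
    simp [mul_comm]
  have hP1 : ∀ t, 0 ≤ t → P t ≤ 1 := by
    intro t ht
    rw [← P0]
    refine apply_le_apply_zero_of_deriv_nonpos h.hasDerivAt_P (fun s hs => ?_) ht
    have hJ := (h.bounds_JK hs).2.1
    have := mul_nonneg (mul_nonneg (mul_nonneg L0.le (sub_nonneg.2 hJ)) (h.P_pos hs).le)
      (h.Q_pos hs).le
    linarith
  have hQ1 : ∀ t, 0 ≤ t → 1 ≤ Q t := by
    intro t ht
    have := apply_le_apply_zero_of_deriv_nonpos (fun s => (h.hasDerivAt_Q s).neg) (fun s hs => by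
      have hK := (h.bounds_JK hs).2.2.2
      have := mul_nonneg (mul_nonneg (mul_nonneg L0.le (sub_nonneg.2 hK)) (h.P_pos hs).le)
        (h.Q_pos hs).le
      linarith) ht
    simp only [Pi.neg_apply] at this
    linarith
  have hQ2 : ∀ t, 0 ≤ t → Q t ≤ (2 : ℝ) ^ t := by
    intro t ht
    have := apply_le_apply_zero_of_deriv_nonpos
      (fun s => (h.hasDerivAt_Q s).mul (dE (-log 2) s)) (fun s hs => by
        obtain ⟨-, -, hK0, hK⟩ := h.bounds_JK hs
        have p1 : (1 - K s) * P s ≤ 1 * 1 :=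
          mul_le_mul (by linarith) (hP1 s hs) (h.P_pos hs).le zero_le_one
        have p2 : 0 ≤ log 2 * Q s * exp (-log 2 * s) :=
          mul_nonneg (mul_nonneg L0.le (h.Q_pos hs).le) (exp_pos _).le
        have := mul_le_mul_of_nonneg_left p1 p2
        linarith) ht
    simp only [Pi.mul_apply, Q0, mul_zero, exp_zero, mul_one] at this
    rw [neg_mul, exp_neg, ← div_eq_mul_inv, div_le_one (exp_pos _)] at this
    rw [e2]
    exact this
  have hP2 : ∀ t, 0 ≤ t → exp (1 - (2 : ℝ) ^ t) ≤ P t := by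
    intro t ht
    have := apply_le_apply_zero_of_deriv_nonpos
      (fun s => ((h.hasDerivAt_P s).mul (dE (log 2) s).exp).neg) (fun s hs => by
        obtain ⟨hJ0, hJ, -, -⟩ := h.bounds_JK hs
        have q := hQ2 s hs
        rw [e2] at q
        have p1 : (1 - J s) * Q s ≤ 1 * exp (log 2 * s) :=
          mul_le_mul (by linarith) q (h.Q_pos hs).le zero_le_one
        have p2 : 0 ≤ log 2 * P s * exp (exp (log 2 * s)) :=
          mul_nonneg (mul_nonneg L0.le (h.P_pos hs).le) (exp_pos _).le
        have := mul_le_mul_of_nonneg_left p1 p2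
        linarith) ht
    simp only [Pi.mul_apply, Pi.neg_apply, P0, mul_zero, exp_zero, one_mul, neg_le_neg_iff] at this
    rw [e2, exp_sub, div_le_iff₀ (exp_pos _)]
    exact this
  have hy : ∀ t, 0 ≤ t → (2 : ℝ) ^ (-(2 : ℝ) ^ t) ≤ Y t := by
    intro t ht
    have := apply_le_apply_zero_of_deriv_nonpos
      (fun s => (h.hasDerivAt_logY s).mul (dE (-log 2) s)) (fun s hs => by
        have ly := log_neg (h.mem_Y s).1 (h.mem_Y s).2
        have p2 : 0 ≤ log 2 * (-log (Y s)) * exp (-log 2 * s) :=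
          mul_nonneg (mul_nonneg L0.le (by linarith)) (exp_pos _).le
        have := mul_le_mul_of_nonneg_left (hP1 s hs) p2
        linarith) ht
    simp only [Pi.mul_apply, Y0, mul_zero, exp_zero, mul_one, one_div, log_inv, neg_neg] at this
    rw [neg_mul (log 2), exp_neg, ← div_eq_mul_inv, div_le_iff₀ (exp_pos _)] at this
    rw [e2 (-_), e2 t, ← le_log_iff_exp_le (h.mem_Y t).1]
    linarith
  have hz : ∀ t, 0 ≤ t → (2 : ℝ) ^ (-(2 : ℝ) ^ (-t)) ≤ Z t := by
    intro t ht
    have := apply_le_apply_zero_of_deriv_nonpos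
      (fun s => (h.hasDerivAt_logZ s).mul (dE (log 2) s)) (fun s hs => by
        have lz := log_neg (h.mem_Z s).1 (h.mem_Z s).2
        have p2 : 0 ≤ log 2 * (-log (Z s)) * exp (log 2 * s) :=
          mul_nonneg (mul_nonneg L0.le (by linarith)) (exp_pos _).le
        have := mul_le_mul_of_nonneg_left (hQ1 s hs) p2
        linarith) ht
    simp only [Pi.mul_apply, Z0, mul_zero, exp_zero, mul_one, one_div, log_inv, neg_neg] at this
    rw [← le_div_iff₀ (exp_pos _), div_eq_mul_inv, ← exp_neg, ← mul_neg] at this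
    rw [e2 (-_), e2 (-t), ← le_log_iff_exp_le (h.mem_Z t).1]
    linarith
  intro t ht
  have hS := (h.invariant ht).1
  have a := hy t ht
  have b := hz t ht
  exact ⟨a, by linarith, b, by linarith, hP2 t ht, hP1 t ht, hQ1 t ht, hQ2 t ht⟩
end

section
/- Suppose (Y, Z, P, Q, J, K) are functions from ℝ to ℝ with Y, Z, P, Q differentiable, Y(t), Z(t) ∈ (0,1) for all t, Y(0) = Z(0) = 1/2, P(0) = Q(0) = 1, J(0) = K(0) = ln 2, and satisfying for all t the equations Y' = ln(2)·P·Y·ln(Y), Z' = −ln(2)·Q·Z·ln(Z), P' = −ln(2)·(1−J)·P·Q, Q' = ln(2)·(1−K)·P·Q, −1 = (Y/ln Z)·J + (Z/ln Y)·K, and 0 = ((Z·ln Z + Y)/(Z·(ln Z)²))·J − ((Y·ln Y + Z)/(Y·(ln Y)²))·K. Let S > 0, let u, v : [0,S] → ℝ be continuously differentiable, and set t(s) := u(s) − v(s). Suppose X : [0,S] → ℝ is differentiable with X(s) ∈ (0,1) for all s, X(0) = Y(t(0)), and X'(s) = ln(2)·P(t(s))·X(s)·ln(X(s))·u'(s)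 − ln(2)·Q(t(s))·(1 − X(s))·ln(1 − X(s))·v'(s) for all s ∈ [0,S]. Then X(S) = Y(t(S)). -/
open Set

/-- Grönwall uniqueness on a compact interval, with a continuous coefficient in the bound. -/
lemma eq_zero_of_norm_deriv_le {E : Type*} [NormedAddCommGroup E] [NormedSpace ℝ E]
    {f f' : ℝ → E} {c : ℝ → ℝ} {a b : ℝ} (hc : ContinuousOn c (Icc a b))
    (hf : ∀ x ∈ Icc a b, HasDerivWithinAt f (f' x) (Icc a b) x) (h0 : f a = 0)
    (hb : ∀ x ∈ Icc a b, ‖f' x‖ ≤ c x * ‖f x‖) : ∀ x ∈ Icc a b, f x = 0 := by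
  obtain ⟨K, hK⟩ := isCompact_Icc.exists_bound_of_continuousOn hc
  refine eq_zero_of_abs_deriv_le_mul_abs_self_of_eq_zero_right (f' := f') (K := K)
    (fun x hx => (hf x hx).continuousWithinAt) (fun x hx => ?_) h0 (fun x hx => ?_)
  · exact (hf x (Ico_subset_Icc_self hx)).mono_of_mem_nhdsWithin (Icc_mem_nhdsGE_of_mem hx)
  · have hx' := Ico_subset_Icc_self hx
    exact (hb x hx').trans
      (mul_le_mul_of_nonneg_right ((le_abs_self _).trans (hK x hx')) (norm_nonneg _))

lemma eq_zero_of_norm_deriv_le_real {E : Type*} [NormedAddCommGroup E] [NormedSpace ℝ E]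
    {f f' : ℝ → E} {c : ℝ → ℝ} (hc : Continuous c) (hf : ∀ x, HasDerivAt f (f' x) x)
    (h0 : f 0 = 0) (hb : ∀ x, ‖f' x‖ ≤ c x * ‖f x‖) (x : ℝ) : f x = 0 := by
  rcases le_total 0 x with hx | hx
  · exact eq_zero_of_norm_deriv_le (a := 0) (b := x) hc.continuousOn
      (fun y _ => (hf y).hasDerivWithinAt) h0 (fun y _ => hb y) x ⟨hx, le_rfl⟩
  · -- reflect the half-line of negative times
    have key := eq_zero_of_norm_deriv_le (a := 0) (b := -x) (f := fun y => f (-y))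
      (f' := fun y => -f' (-y)) (c := fun y => c (-y)) (hc.comp continuous_neg).continuousOn
      (fun y _ => by
        have := (hf (-y)).scomp y (hasDerivAt_neg y)
        simpa [Function.comp_def] using this.hasDerivWithinAt)
      (by simpa using h0) (fun y _ => by simpa using hb (-y)) (-x) ⟨by linarith, le_rfl⟩
    simpa using key

/-- For `x ≤ y` write the difference as `(x - y) ln y + x (ln x - ln y)`; the second term is at most
`y - x` in absolute value because `ln (y / x) ≤ y / x - 1`. -/
lemma abs_mul_log_sub_le_of_le {x y : ℝ} (hx : 0 < x) (hxy : x ≤ y) :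
    |x * Real.log x - y * Real.log y| ≤ (1 + |Real.log x| + |Real.log y|) * |x - y| := by
  have hy : 0 < y := hx.trans_le hxy
  have h1 : x * (Real.log y - Real.log x) ≤ y - x := by
    rw [← Real.log_div hy.ne' hx.ne']
    calc x * Real.log (y / x) ≤ x * (y / x - 1) :=
          mul_le_mul_of_nonneg_left (Real.log_le_sub_one_of_pos (by positivity)) hx.le
      _ = y - x := by field_simp
  have h2 : 0 ≤ x * (Real.log y - Real.log x) :=
    mul_nonneg hx.le (sub_nonneg.2 (Real.log_le_log hx hxy))
  have h3 : |x - y| = y - x := by rw [abs_sub_comm]; exact abs_of_nonneg (by linarith)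
  have h4 : |x * (Real.log x - Real.log y)| ≤ |x - y| := by
    rw [h3, abs_le]; constructor <;> linarith
  calc |x * Real.log x - y * Real.log y|
      = |(x - y) * Real.log y + x * (Real.log x - Real.log y)| := by congr 1; ring
    _ ≤ |x - y| * |Real.log y| + |x - y| := by
        refine (abs_add_le _ _).trans ?_
        rw [abs_mul]; gcongr
    _ ≤ _ := by nlinarith [mul_nonneg (abs_nonneg (Real.log x)) (abs_nonneg (x - y))]

lemma abs_mul_log_sub_le {x y : ℝ} (hx : 0 < x) (hy : 0 < y) :
    |x * Real.log x - y * Real.log y| ≤ (1 + |Real.log x| + |Real.log y|) * |x - y| := by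
  rcases le_total x y with h | h
  · exact abs_mul_log_sub_le_of_le hx h
  · have := abs_mul_log_sub_le_of_le hy h
    rw [abs_sub_comm, abs_sub_comm x y]
    linarith

/-- The conserved quantity `Y + Z = 1`, together with its derivative `P Y ln Y = Q Z ln Z`. -/
lemma IVPSol.conservation {Y Z P Q J K : ℝ → ℝ} (h : IVPSol Y Z P Q J K) (t : ℝ) :
    Y t + Z t - 1 = 0 ∧
      P t * (Y t * Real.log (Y t)) - Q t * (Z t * Real.log (Z t)) = 0 := by
  obtain ⟨dY, dZ, dP, dQ, hY, hZ, Y0, Z0, P0, Q0, -, -, eY, eZ, eP, eQ, hc1, -⟩ := h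
  have Yne : ∀ t, Y t ≠ 0 := fun t => (hY t).1.ne'
  have Zne : ∀ t, Z t ≠ 0 := fun t => (hZ t).1.ne'
  have ane : ∀ t, Real.log (Y t) ≠ 0 := fun t => (Real.log_neg (hY t).1 (hY t).2).ne
  have bne : ∀ t, Real.log (Z t) ≠ 0 := fun t => (Real.log_neg (hZ t).1 (hZ t).2).ne
  have cY := dY.continuous
  have cZ := dZ.continuous
  have cP := dP.continuous
  have cQ := dQ.continuous
  have ca : Continuous fun t => Real.log (Y t) := cY.log Yne
  have cb : Continuous fun t => Real.log (Z t) := cZ.log Zne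
  have HY : ∀ t, HasDerivAt Y (Real.log 2 * P t * Y t * Real.log (Y t)) t :=
    fun t => eY t ▸ (dY t).hasDerivAt
  have HZ : ∀ t, HasDerivAt Z (-(Real.log 2) * Q t * Z t * Real.log (Z t)) t :=
    fun t => eZ t ▸ (dZ t).hasDerivAt
  have HP : ∀ t, HasDerivAt P (-(Real.log 2) * (1 - J t) * P t * Q t) t :=
    fun t => eP t ▸ (dP t).hasDerivAt
  have HQ : ∀ t, HasDerivAt Q (Real.log 2 * (1 - K t) * P t * Q t) t :=
    fun t => eQ t ▸ (dQ t).hasDerivAt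
  let F : ℝ → ℝ := fun t => Y t + Z t - 1
  let G : ℝ → ℝ := fun t => P t * (Y t * Real.log (Y t)) - Q t * (Z t * Real.log (Z t))
  let A : ℝ → ℝ := fun t => P t * (Real.log (Y t) + 1)
    + Q t * (Z t * Real.log (Z t)) * (Real.log (Y t) + 1) / (Y t * Real.log (Y t))
    - Q t * (Y t * Real.log (Y t) + Z t * Real.log (Z t) + Real.log (Y t) * Real.log (Z t))
      / (Y t * Real.log (Y t))
  let B : ℝ → ℝ := fun t => Q t ^ 2 * Z t * Real.log (Z t) ^ 2 / Y t
  have cA : Continuous A := by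
    have hne : ∀ t, Y t * Real.log (Y t) ≠ 0 := fun t => mul_ne_zero (Yne t) (ane t)
    exact ((cP.mul (ca.add continuous_const)).add
      (((cQ.mul (cZ.mul cb)).mul (ca.add continuous_const)).div (cY.mul ca) hne)).sub
      ((cQ.mul (((cY.mul ca).add (cZ.mul cb)).add (ca.mul cb))).div (cY.mul ca) hne)
  have cB : Continuous B := (((cQ.pow 2).mul cZ).mul (cb.pow 2)).div cY Yne
  have HF : ∀ t, HasDerivAt F (Real.log 2 * G t) t := fun t => by
    refine (((HY t).add (HZ t)).sub_const 1).congr_deriv ?_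
    simp only [G]; ring
  have HG : ∀ t, HasDerivAt G (Real.log 2 * (A t * G t + B t * F t)) t := fun t => by
    have hJK : Y t * Real.log (Y t) * J t + Z t * Real.log (Z t) * K t
        = -(Real.log (Y t) * Real.log (Z t)) := by
      have := hc1 t
      have h1 := ane t
      have h2 := bne t
      field_simp at this
      linarith
    refine (((HP t).mul ((HY t).mul ((HY t).log (Yne t)))).sub
      ((HQ t).mul ((HZ t).mul ((HZ t).log (Zne t))))).congr_deriv ?_
    have hK : K t = (-(Real.log (Y t) * Real.log (Z t)) - Y t * Real.log (Y t) * J t)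
        / (Z t * Real.log (Z t)) := by
      rw [eq_div_iff (mul_ne_zero (Zne t) (bne t))]; linarith
    have h1 := ane t
    have h2 := bne t
    have h3 := Yne t
    have h4 := Zne t
    simp only [A, B, F, G, hK, Pi.mul_apply]
    field_simp
    ring
  have key := eq_zero_of_norm_deriv_le_real (f := fun t => (F t, G t))
    (f' := fun t => (Real.log 2 * G t, Real.log 2 * (A t * G t + B t * F t)))
    (c := fun t => Real.log 2 * (1 + |A t| + |B t|))
    (continuous_const.mul ((continuous_const.add cA.abs).add cB.abs))
    (fun t => (HF t).prodMk (HG t))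
    (by simp only [F, G, Y0, Z0, P0, Q0]; norm_num)
    (fun t => by
      have hl : 0 ≤ Real.log 2 := Real.log_nonneg (by norm_num)
      have hF : |F t| ≤ ‖(F t, G t)‖ := norm_fst_le (F t, G t)
      have hG : |G t| ≤ ‖(F t, G t)‖ := norm_snd_le (F t, G t)
      have hn := norm_nonneg (F t, G t)
      generalize ‖(F t, G t)‖ = n at hF hG hn ⊢
      have pA := mul_nonneg (abs_nonneg (A t)) hn
      have pB := mul_nonneg (abs_nonneg (B t)) hn
      rw [norm_prod_le_iff]
      constructor
      · rw [Real.norm_eq_abs, abs_mul, abs_of_nonneg hl, mul_assoc]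
        refine mul_le_mul_of_nonneg_left ?_ hl
        nlinarith
      · rw [Real.norm_eq_abs, abs_mul, abs_of_nonneg hl, mul_assoc]
        refine mul_le_mul_of_nonneg_left ((abs_add_le _ _).trans ?_) hl
        rw [abs_mul, abs_mul]
        have q1 := mul_le_mul_of_nonneg_left hG (abs_nonneg (A t))
        have q2 := mul_le_mul_of_nonneg_left hF (abs_nonneg (B t))
        nlinarith) t
  exact ⟨congrArg Prod.fst key, congrArg Prod.snd key⟩

/-- The value transported along a piecewise smooth path travels together
with `Y`: if `X` evolves along the path `(u, v)` by the infinitesimal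
squaring maps and starts at `Y(u(0) − v(0))`, then `X(S) = Y(u(S) − v(S))`. -/
theorem stmt_16 (Y Z P Q J K : ℝ → ℝ) (h : IVPSol Y Z P Q J K)
    (S : ℝ) (hS : 0 < S) (u v X : ℝ → ℝ)
    (hu : ContDiffOn ℝ 1 u (Set.Icc 0 S)) (hv : ContDiffOn ℝ 1 v (Set.Icc 0 S))
    (hX : DifferentiableOn ℝ X (Set.Icc 0 S))
    (hX01 : ∀ s ∈ Set.Icc (0 : ℝ) S, X s ∈ Set.Ioo (0 : ℝ) 1)
    (hX0 : X 0 = Y (u 0 - v 0))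
    (hODE : ∀ s ∈ Set.Icc (0 : ℝ) S,
      derivWithin X (Set.Icc 0 S) s =
        Real.log 2 * P (u s - v s) * X s * Real.log (X s)
          * derivWithin u (Set.Icc 0 S) s
        - Real.log 2 * Q (u s - v s) * (1 - X s) * Real.log (1 - X s)
          * derivWithin v (Set.Icc 0 S) s) :
    X S = Y (u S - v S) := by
  have hcons := h.conservation
  obtain ⟨dY, dZ, dP, dQ, hY, hZ, -, -, -, -, -, -, eY, -⟩ := h
  have hYZ : ∀ t, Z t = 1 - Y t := fun t => by linarith [(hcons t).1]
  have hU := uniqueDiffOn_Icc hS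
  have cu := hu.continuousOn_derivWithin hU le_rfl
  have cv := hv.continuousOn_derivWithin hU le_rfl
  have ct : ContinuousOn (fun s => u s - v s) (Icc 0 S) := hu.continuousOn.sub hv.continuousOn
  have cX := hX.continuousOn
  have cYt : ContinuousOn (fun s => Y (u s - v s)) (Icc 0 S) := dY.continuous.comp_continuousOn ct
  have cPt : ContinuousOn (fun s => P (u s - v s)) (Icc 0 S) := dP.continuous.comp_continuousOn ct
  have cQt : ContinuousOn (fun s => Q (u s - v s)) (Icc 0 S) := dQ.continuous.comp_continuousOn ct
  have cl1 : ContinuousOn (fun s => Real.log (X s)) (Icc 0 S) :=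
    cX.log fun s hs => (hX01 s hs).1.ne'
  have cl2 : ContinuousOn (fun s => Real.log (Y (u s - v s))) (Icc 0 S) :=
    cYt.log fun s _ => (hY _).1.ne'
  have cl3 : ContinuousOn (fun s => Real.log (1 - X s)) (Icc 0 S) :=
    (continuousOn_const.sub cX).log fun s hs => (sub_pos.2 (hX01 s hs).2).ne'
  have cl4 : ContinuousOn (fun s => Real.log (1 - Y (u s - v s))) (Icc 0 S) :=
    (continuousOn_const.sub cYt).log fun s _ => (sub_pos.2 (hY _).2).ne'
  have key := eq_zero_of_norm_deriv_le (a := 0) (b := S)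
    (f := fun s => X s - Y (u s - v s))
    (f' := fun s =>
      Real.log 2 * P (u s - v s) * derivWithin u (Icc 0 S) s
        * (X s * Real.log (X s) - Y (u s - v s) * Real.log (Y (u s - v s)))
      - Real.log 2 * Q (u s - v s) * derivWithin v (Icc 0 S) s
        * ((1 - X s) * Real.log (1 - X s)
            - (1 - Y (u s - v s)) * Real.log (1 - Y (u s - v s))))
    (c := fun s =>
      |Real.log 2 * P (u s - v s) * derivWithin u (Icc 0 S) s|
        * (1 + |Real.log (X s)| + |Real.log (Y (u s - v s))|)
      + |Real.log 2 * Q (u s - v s) * derivWithin v (Icc 0 S) s|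
        * (1 + |Real.log (1 - X s)| + |Real.log (1 - Y (u s - v s))|))
    ((((continuousOn_const.mul cPt).mul cu).abs.mul
        ((continuousOn_const.add cl1.abs).add cl2.abs)).add
      (((continuousOn_const.mul cQt).mul cv).abs.mul
        ((continuousOn_const.add cl3.abs).add cl4.abs)))
    (fun s hs => by
      have hXs := (hX s hs).hasDerivWithinAt
      rw [hODE s hs] at hXs
      have hus := ((hu.differentiableOn one_ne_zero) s hs).hasDerivWithinAt
      have hvs := ((hv.differentiableOn one_ne_zero) s hs).hasDerivWithinAt
      have hYs := (dY (u s - v s)).hasDerivAt.comp_hasDerivWithinAt s (hus.sub hvs)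
      rw [eY] at hYs
      refine (hXs.sub hYs).congr_deriv ?_
      have hG := (hcons (u s - v s)).2
      rw [hYZ] at hG
      -- the two sides differ by a multiple of `P Y ln Y - Q (1 - Y) ln (1 - Y) = 0`
      linear_combination (Real.log 2 * derivWithin v (Icc 0 S) s) * hG)
    (by simp [hX0])
    (fun s hs => by
      have b1 := abs_mul_log_sub_le (hX01 s hs).1 (hY (u s - v s)).1
      have b2 := abs_mul_log_sub_le (sub_pos.2 (hX01 s hs).2) (sub_pos.2 (hY (u s - v s)).2)
      have e : |1 - X s - (1 - Y (u s - v s))| = |X s - Y (u s - v s)| := by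
        rw [abs_sub_comm]; congr 1; ring
      rw [e] at b2
      rw [Real.norm_eq_abs, Real.norm_eq_abs, add_mul, mul_assoc |_|, mul_assoc |_|]
      refine (abs_sub _ _).trans (add_le_add ?_ ?_)
      · rw [abs_mul]
        exact mul_le_mul_of_nonneg_left b1 (abs_nonneg _)
      · rw [abs_mul]
        exact mul_le_mul_of_nonneg_left b2 (abs_nonneg _)) S ⟨hS.le, le_rfl⟩
  exact sub_eq_zero.1 key
end
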